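/- arXiv:1812.09564 — 5 statements merged into one kernel-verified Lean document; each statement's English description precedes it below -/
import Mathlib

section
/- For every natural number n ≥ 6 and every ε > 0, there exist positive constants c, C_ε such that for all sufficiently large B: c · B (log B)^(n(n−1)/2 − 1) ≤ N_n(B) and N_n(B) ≤ C_ε · B^(n/2 − 7/6 + ε). -/
/-- `f n r` is the number of subrings of `ℤ^n` (with identity `(1,…,1)`) of index `r`. -/
noncomputable def subringCount (n r : ℕ) : ℕ :=
  Nat.card {R : Subring (Fin n → ℤ) // R.toAddSubgroup.index = r}

/-- `N n B = ∑_{r ≤ B} f n r`. -/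
noncomputable def subringCountUpTo (n B : ℕ) : ℕ :=
  ∑ r ∈ Finset.Icc 1 B, subringCount n r

/-!
*Upper bound.* A unital subring of `ℤ^(d+1)` is determined by the lattice of its elements with
vanishing first coordinate, a multiplicatively closed sublattice of `ℤ^d` of the same index. When
such a lattice is built up row by row in Hermite normal form, a new row `v` with pivot `p ^ k` over
the lattice `L` of the lower rows satisfies `v ^ 2 ≡ p ^ k v` modulo `L`. Solving this one
coordinate after the other leaves at most `2 p ^ (e / 2)` choices modulo `p ^ e` at a pivot `p ^ e`
of `L`, and fewer at the first one, where the equation is `c ^ 2 ≡ p ^ k c`. Optimising over the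
pivots gives `f_n(p ^ k) ≪ (k + 1) ^ d p ^ ((n / 2 - 7 / 6) k - 1)`. Since `f_n` is
submultiplicative on coprime arguments, comparison with an Euler product shows that
`∑ f_n(r) r ^ (-s)` converges for `s > n / 2 - 7 / 6`.

*Lower bound.* For pairwise coprime `m_ij` the ring of all `x` with `x_i ≡ x_j` modulo `m_ij` has
index `∏ m_ij` and determines the `m_ij`, so `N_n(B)` is at least the number of pairwise coprime
tuples of `n (n - 1) / 2` positive integers with product at most `B`. Among the integers congruent
to `1` modulo `z!` only common divisors exceeding `z` can occur, and for large `z` these spoil less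
than half of all tuples.
-/

open Finset Function

section CosetCount

theorem encard_le_mul_of_encard_fiber_le {α β : Type*} {f : α → β} {s : Set α} {t : Set β}
    (hf : Set.MapsTo f s t) {m k : ℕ} (ht : t.encard ≤ m)
    (hfib : ∀ b ∈ t, {a ∈ s | f a = b}.encard ≤ k) : s.encard ≤ (m * k : ℕ) := by
  classical
  obtain ⟨ht_fin, htm⟩ := Set.encard_le_coe_iff_finite_ncard_le.mp ht
  have hs_fin : s.Finite :=
    (ht_fin.biUnion fun b hb => Set.finite_of_encard_le_coe (hfib b hb)).subset
      fun a ha => Set.mem_biUnion (hf ha) ⟨ha, rfl⟩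
  lift s to Finset α using hs_fin
  lift t to Finset β using ht_fin
  have hcard := card_le_mul_card_image_of_maps_to (s := s) hf k fun b hb => by
    have := hfib b hb
    rw [← Nat.cast_le (α := ℕ∞), ← Set.encard_coe_eq_coe_finsetCard, coe_filter]
    exact this
  rw [Set.ncard_coe_finset] at htm
  rw [Set.encard_coe_eq_coe_finsetCard, Nat.cast_le, mul_comm]
  exact hcard.trans (Nat.mul_le_mul_left k htm)

variable {G H A : Type*} [AddCommGroup G] [AddCommGroup H] [AddCommGroup A]

/-- The number of cosets of `L` that meet `S`. -/
noncomputable def cosetCount (L : AddSubgroup G) (S : Set G) : ℕ∞ :=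
  ((QuotientAddGroup.mk : G → G ⧸ L) '' S).encard

theorem cosetCount_mono (L : AddSubgroup G) {S T : Set G} (h : S ⊆ T) :
    cosetCount L S ≤ cosetCount L T :=
  Set.encard_le_encard (Set.image_mono h)

theorem cosetCount_le_card {L : AddSubgroup G} {S : Set G} (X : Finset G)
    (h : ∀ x ∈ S, ∃ y ∈ X, x - y ∈ L) : cosetCount L S ≤ #X := by
  rw [← Set.encard_coe_eq_coe_finsetCard]
  refine (Set.encard_le_encard ?_).trans (Set.encard_image_le (QuotientAddGroup.mk : G → G ⧸ L) X)
  rintro _ ⟨x, hx, rfl⟩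
  obtain ⟨y, hy, hxy⟩ := h x hx
  exact ⟨y, hy, (QuotientAddGroup.eq_iff_sub_mem.mpr hxy).symm⟩

theorem cosetCount_le_one_of_subsingleton [Subsingleton G] (L : AddSubgroup G) (S : Set G) :
    cosetCount L S ≤ 1 :=
  Set.encard_le_one_iff_subsingleton.mpr (Set.subsingleton_of_subsingleton.image _)

theorem cosetCount_union_le (L : AddSubgroup G) (S T : Set G) :
    cosetCount L (S ∪ T) ≤ cosetCount L S + cosetCount L T := by
  rw [cosetCount, Set.image_union]
  exact Set.encard_union_le _ _

theorem cosetCount_le_cosetCount_comap (L : AddSubgroup G) (φ : H →+ G) (x : G) {S : Set G}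
    {T : Set H} (h : S ⊆ (fun y => x + φ y) '' T) :
    cosetCount L S ≤ cosetCount (L.comap φ) T := by
  let g : H ⧸ L.comap φ → G ⧸ L := fun z => x + QuotientAddGroup.map _ L φ le_rfl z
  refine (Set.encard_le_encard ?_).trans (Set.encard_image_le g _)
  rintro _ ⟨_, hs, rfl⟩
  obtain ⟨y, hy, rfl⟩ := h hs
  exact ⟨y, ⟨y, hy, rfl⟩, rfl⟩

theorem cosetCount_le_mul_of_map {L : AddSubgroup G} {S : Set G} (f : G →+ A)
    (hS : ∀ x ∈ S, ∀ y ∈ L, x + y ∈ S) {m k : ℕ} (himage : cosetCount (L.map f) (f '' S) ≤ m)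
    (hfib : ∀ c, cosetCount L {x ∈ S | f x = c} ≤ k) : cosetCount L S ≤ (m * k : ℕ) := by
  let g := QuotientAddGroup.map L (L.map f) f (AddSubgroup.le_comap_map f L)
  refine encard_le_mul_of_encard_fiber_le (f := g) ?_ himage ?_
  · rintro _ ⟨x, hx, rfl⟩
    exact ⟨f x, ⟨x, hx, rfl⟩, rfl⟩
  · rintro _ ⟨_, ⟨x₀, -, rfl⟩, rfl⟩
    refine (Set.encard_le_encard ?_).trans (hfib (f x₀))
    rintro _ ⟨⟨x, hx, rfl⟩, hxx₀⟩
    obtain ⟨y, hy, hfy⟩ := QuotientAddGroup.eq.mp hxx₀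
    refine ⟨x + y, ⟨hS x hx y hy, ?_⟩, QuotientAddGroup.mk_add_of_mem x hy⟩
    rw [map_add, hfy, add_neg_cancel_left]

end CosetCount

section QuadraticCongruences

theorem cosetCount_residueClass_le (a b : ℕ) (hb : b ≠ 0) (x : ℤ) :
    cosetCount (AddSubgroup.zmultiples ((a * b : ℕ) : ℤ)) {c | (a : ℤ) ∣ c - x} ≤ b := by
  classical
  let X := (range b).image fun t : ℕ => x + a * t
  have hX : #X ≤ b := card_image_le.trans (card_range b).le
  refine (cosetCount_le_card X ?_).trans (by exact_mod_cast hX)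
  rintro c ⟨t, ht⟩
  have hb' : (0 : ℤ) < b := by positivity
  obtain ⟨s, hs⟩ := Int.eq_ofNat_of_zero_le (Int.emod_nonneg t hb'.ne')
  have hsb : s < b := by exact_mod_cast hs ▸ Int.emod_lt_of_pos t hb'
  refine ⟨_, mem_image_of_mem _ (mem_range.mpr hsb), ?_⟩
  refine Int.mem_zmultiples_iff.mpr ⟨t / b, ?_⟩
  push_cast
  linear_combination ht - a * Int.emod_add_mul_ediv t b + a * hs

variable {p : ℕ}

theorem exists_pow_dvd_and_pow_dvd_of_pow_dvd_mul (hp : p.Prime) {k : ℕ} {u v : ℤ}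
    (h : (p : ℤ) ^ k ∣ u * v) : ∃ i j, i + j = k ∧ (p : ℤ) ^ i ∣ u ∧ (p : ℤ) ^ j ∣ v := by
  obtain ⟨w, hw⟩ := h
  obtain ⟨i, j, b, c, hij, -, rfl, rfl⟩ :=
    mul_eq_mul_prime_pow (Nat.prime_iff_prime_int.mp hp) (hw.trans (mul_comm _ w))
  exact ⟨i, j, hij, dvd_mul_left _ _, dvd_mul_left _ _⟩

theorem cosetCount_le_of_pow_dvd_sub_or_pow_dvd_sub (hp : p.Prime) {k e : ℕ} (he : e ≤ k)
    {S : Set ℤ} (x y : ℤ)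
    (hS : ∀ c ∈ S, (p : ℤ) ^ (k - e) ∣ c - x ∨ (p : ℤ) ^ (k - e) ∣ c - y) :
    cosetCount (AddSubgroup.zmultiples ((p ^ k : ℕ) : ℤ)) S ≤ (2 * p ^ e : ℕ) := by
  have hclass (z : ℤ) := cosetCount_residueClass_le (p ^ (k - e)) (p ^ e)
    (pow_ne_zero e hp.ne_zero) z
  rw [← pow_add, Nat.sub_add_cancel he] at hclass
  push_cast at hclass ⊢
  rw [two_mul]
  exact ((cosetCount_mono _ hS).trans (cosetCount_union_le _ _ _)).trans
    (add_le_add (hclass x) (hclass y))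

-- Fixing one root `x`, every root `c` satisfies `p ^ k ∣ (c - x) * (c - (a - x))`.
theorem cosetCount_quadratic_roots_le (hp : p.Prime) (k : ℕ) (a q : ℤ) :
    cosetCount (AddSubgroup.zmultiples ((p ^ k : ℕ) : ℤ))
      {c | ((p ^ k : ℕ) : ℤ) ∣ c * c - a * c - q} ≤ (2 * p ^ (k / 2) : ℕ) := by
  rcases Set.eq_empty_or_nonempty {c : ℤ | ((p ^ k : ℕ) : ℤ) ∣ c * c - a * c - q} with
    hempty | ⟨x, hx⟩
  · rw [hempty, cosetCount, Set.image_empty, Set.encard_empty]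
    exact zero_le
  refine cosetCount_le_of_pow_dvd_sub_or_pow_dvd_sub hp (Nat.div_le_self k 2) x (a - x) ?_
  intro c hc
  have hmul : (p : ℤ) ^ k ∣ (c - x) * (c - (a - x)) := by
    rw [show (c - x) * (c - (a - x)) = (c * c - a * c - q) - (x * x - a * x - q) by ring]
    exact_mod_cast dvd_sub hc hx
  obtain ⟨i, j, hij, hi, hj⟩ := exists_pow_dvd_and_pow_dvd_of_pow_dvd_mul hp hmul
  rcases le_or_gt (k - k / 2) i with hki | hki
  · exact .inl ((pow_dvd_pow _ hki).trans hi)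
  · exact .inr ((pow_dvd_pow _ (by omega)).trans hj)

theorem pow_dvd_or_pow_dvd_sub_of_pow_dvd (hp : p.Prime) {k m : ℕ} {c : ℤ}
    (hc : (p : ℤ) ^ k ∣ c * c - p ^ m * c) :
    (p : ℤ) ^ (k - m) ∣ c ∨ (p : ℤ) ^ (k - m) ∣ c - p ^ m := by
  have hmul : (p : ℤ) ^ k ∣ c * (c - p ^ m) := by convert hc using 1; ring
  obtain ⟨i, j, hij, hi, hj⟩ := exists_pow_dvd_and_pow_dvd_of_pow_dvd_mul hp hmul
  rcases le_or_gt (k - m) i with hki | hki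
  · exact .inl ((pow_dvd_pow _ hki).trans hi)
  rcases le_or_gt (k - m) j with hkj | hkj
  · exact .inr ((pow_dvd_pow _ hkj).trans hj)
  have hdvd : (p : ℤ) ^ (m + 1) ∣ p ^ m := by
    simpa only [sub_sub_cancel] using
      dvd_sub ((pow_dvd_pow (p : ℤ) (by omega : m + 1 ≤ i)).trans hi)
        ((pow_dvd_pow (p : ℤ) (by omega : m + 1 ≤ j)).trans hj)
  have := (Nat.pow_dvd_pow_iff_le_right hp.one_lt).mp (by exact_mod_cast hdvd)
  omega

theorem cosetCount_quadratic_roots_zero_le (hp : p.Prime) (k m : ℕ) :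
    cosetCount (AddSubgroup.zmultiples ((p ^ k : ℕ) : ℤ))
      {c | ((p ^ k : ℕ) : ℤ) ∣ c * c - p ^ m * c} ≤ (2 * p ^ min m (k / 2) : ℕ) := by
  rcases le_or_gt (k / 2) m with hm | hm
  · rw [min_eq_right hm]
    simpa only [sub_zero] using cosetCount_quadratic_roots_le hp k (p ^ m) 0
  · rw [min_eq_left hm.le]
    refine cosetCount_le_of_pow_dvd_sub_or_pow_dvd_sub hp (by omega) 0 (p ^ m) fun c hc => ?_
    rw [sub_zero]
    exact pow_dvd_or_pow_dvd_sub_of_pow_dvd hp (by exact_mod_cast hc)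

theorem exists_pow_dvd_pow_or_pow_dvd_pow_sub_one (hp : p.Prime) (M : ℕ) :
    ∃ N : ℕ, ∀ c : ℤ, (p : ℤ) ^ M ∣ c ^ (N + 1) ∨ (p : ℤ) ^ M ∣ c ^ (N + 1) - 1 := by
  have hφ : 0 < (p ^ M).totient := Nat.totient_pos.mpr (pow_pos hp.pos M)
  obtain ⟨N, hN⟩ := Nat.exists_eq_succ_of_ne_zero (mul_pos hφ M.succ_pos).ne'
  refine ⟨N, fun c => ?_⟩
  rw [← Nat.succ_eq_add_one N, ← hN]
  by_cases hpc : (p : ℤ) ∣ c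
  · exact .inl ((pow_dvd_pow_of_dvd hpc M).trans (pow_dvd_pow _ (by nlinarith)))
  · right
    have hcop : IsCoprime c ((p ^ M : ℕ) : ℤ) := by
      push_cast
      exact ((Nat.prime_iff_prime_int.mp hp).coprime_iff_not_dvd.mpr hpc).symm.pow_right
    obtain ⟨u, hu⟩ := (ZMod.coe_int_isUnit_iff_isCoprime c (p ^ M)).mpr hcop.symm
    have hpow : (c : ZMod (p ^ M)) ^ (p ^ M).totient = 1 := by
      rw [← hu, ← Units.val_pow_eq_pow_val, ZMod.pow_totient, Units.val_one]
    have hzero : ((c ^ ((p ^ M).totient * (M + 1)) - 1 : ℤ) : ZMod (p ^ M)) = 0 := by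
      push_cast
      rw [pow_mul, hpow, one_pow, sub_self]
    exact_mod_cast (ZMod.intCast_zmod_eq_zero_iff_dvd _ _).mp hzero

end QuadraticCongruences

section ShortExactSequences

variable {H G A : Type*} [AddCommGroup H] [AddCommGroup G] [AddCommGroup A] {ι : H →+ G}
  {f : G →+ A}

theorem index_eq_index_map_mul_index_comap (hf : Surjective f) (hι : ι.range = f.ker)
    (L : AddSubgroup G) : L.index = (L.map f).index * (L.comap ι).index := by
  rw [AddSubgroup.index_comap, hι, AddSubgroup.index_map, AddMonoidHom.range_eq_top.mpr hf,
    AddSubgroup.index_top, mul_one, ← AddSubgroup.relIndex_sup_left, mul_comm,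
    AddSubgroup.relIndex_mul_index le_sup_left]

theorem le_of_comap_le_of_map_le_zmultiples (hι : f.ker ≤ ι.range) {L L' : AddSubgroup G} {v : G}
    (hv : v ∈ L) (hv' : v ∈ L') (hmap : L.map f ≤ AddSubgroup.zmultiples (f v))
    (hcomap : L.comap ι ≤ L'.comap ι) : L ≤ L' := by
  intro x hx
  obtain ⟨t, ht⟩ := AddSubgroup.mem_zmultiples_iff.mp (hmap ⟨x, hx, rfl⟩)
  have hker : x - t • v ∈ f.ker := by
    rw [AddMonoidHom.mem_ker, map_sub, map_zsmul, ht, sub_self]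
  obtain ⟨y, hy⟩ := hι hker
  have hyL : ι y ∈ L := hy ▸ L.sub_mem hx (L.zsmul_mem hv t)
  have hyL' : x - t • v ∈ L' := hy ▸ hcomap hyL
  simpa only [sub_add_cancel] using L'.add_mem hyL' (L'.zsmul_mem hv' t)

end ShortExactSequences

section HermiteDiagonal

variable {d : ℕ}

/-- The embedding of `ℤ^d` into `ℤ^(d+1)` as the ideal of vectors with vanishing first
coordinate. -/
def consZero (d : ℕ) : (Fin d → ℤ) →ₙ+* (Fin (d + 1) → ℤ) where
  toFun y := Fin.cons 0 y
  map_zero' := by ext i; cases i using Fin.cases <;> simp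
  map_add' x y := by ext i; cases i using Fin.cases <;> simp
  map_mul' x y := by ext i; cases i using Fin.cases <;> simp

/-- `consZero` as a homomorphism of additive groups. -/
abbrev consZeroHom (d : ℕ) : (Fin d → ℤ) →+ (Fin (d + 1) → ℤ) := (consZero d : _ →+ _)

/-- The first coordinate on `ℤ^(d+1)`. -/
abbrev headHom (d : ℕ) : (Fin (d + 1) → ℤ) →+ ℤ := Pi.evalAddMonoidHom (fun _ => ℤ) 0

@[simp] theorem consZero_apply_zero (y : Fin d → ℤ) : consZero d y 0 = 0 := rfl

@[simp] theorem consZero_apply_succ (y : Fin d → ℤ) (i : Fin d) : consZero d y i.succ = y i := rfl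

theorem consZero_tail {x : Fin (d + 1) → ℤ} (hx : x 0 = 0) : consZero d (Fin.tail x) = x := by
  change (Fin.cons 0 (Fin.tail x) : Fin (d + 1) → ℤ) = x
  rw [← hx, Fin.cons_self_tail]

theorem range_consZeroHom (d : ℕ) : (consZeroHom d).range = (headHom d).ker :=
  le_antisymm (by rintro _ ⟨y, rfl⟩; exact consZero_apply_zero y) fun x hx => ⟨_, consZero_tail hx⟩

theorem headHom_surjective (d : ℕ) : Surjective (headHom d) := fun t => ⟨fun _ => t, rfl⟩

theorem zmultiples_index_eq (H : AddSubgroup ℤ) : AddSubgroup.zmultiples (H.index : ℤ) = H := by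
  obtain ⟨a, rfl⟩ := Int.subgroup_cyclic H
  rw [← AddSubgroup.zmultiples_eq_closure, Int.index_zmultiples, Int.zmultiples_natAbs]

/-- The diagonal of the Hermite normal form of `L`: its `i`-th entry generates the ideal of all
`x i` for `x ∈ L` whose earlier coordinates vanish. Entries are `0` where `L` has infinite
index. -/
noncomputable def hermiteDiag : {d : ℕ} → AddSubgroup (Fin d → ℤ) → Fin d → ℕ
  | 0, _ => Fin.elim0
  | d + 1, L => Fin.cons (L.map (headHom d)).index (hermiteDiag (L.comap (consZeroHom d)))

theorem index_eq_prod_hermiteDiag (L : AddSubgroup (Fin d → ℤ)) :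
    L.index = ∏ i, hermiteDiag L i := by
  induction d with
  | zero => rw [Subsingleton.elim L ⊤, AddSubgroup.index_top, Fin.prod_univ_zero]
  | succ d ih =>
    rw [index_eq_index_map_mul_index_comap (headHom_surjective d) (range_consZeroHom d),
      Fin.prod_univ_succ, ih]
    rfl

theorem map_headHom_eq_zmultiples {L : AddSubgroup (Fin (d + 1) → ℤ)} {δ : Fin (d + 1) → ℕ}
    (hL : hermiteDiag L = δ) : L.map (headHom d) = AddSubgroup.zmultiples (δ 0 : ℤ) := by
  rw [← hL]
  exact (zmultiples_index_eq _).symm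

theorem hermiteDiag_comap_consZeroHom {L : AddSubgroup (Fin (d + 1) → ℤ)} {δ : Fin (d + 1) → ℕ}
    (hL : hermiteDiag L = δ) : hermiteDiag (L.comap (consZeroHom d)) = Fin.tail δ := by
  rw [← hL]
  rfl

end HermiteDiagonal

section QuadraticEquations

/-- The elements `x` that stabilise the non-unital subring `L` and solve the quadratic equation
`x ^ 2 = a x + q` modulo `L`. -/
def quadSolutions {G : Type*} [CommRing G] (L : NonUnitalSubring G) (a : ℤ) (q : G) : Set G :=
  {x | (∀ y ∈ L, x * y ∈ L) ∧ x * x - a • x - q ∈ L}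

theorem add_mem_quadSolutions {G : Type*} [CommRing G] {L : NonUnitalSubring G} {a : ℤ} {q x y : G}
    (hx : x ∈ quadSolutions L a q) (hy : y ∈ L) : x + y ∈ quadSolutions L a q := by
  obtain ⟨hstab, heq⟩ := hx
  refine ⟨fun z hz => ?_, ?_⟩
  · rw [add_mul]
    exact add_mem (hstab z hz) (mul_mem hy hz)
  · have hexpand : (x + y) * (x + y) - a • (x + y) - q =
        (x * x - a • x - q) + (x * y + x * y + y * y - a • y) := by
      rw [smul_add]; ring
    rw [hexpand]
    exact add_mem heq (sub_mem (add_mem (add_mem (hstab y hy) (hstab y hy)) (mul_mem hy hy))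
      (zsmul_mem hy a))

variable {d : ℕ} (L : NonUnitalSubring (Fin (d + 1) → ℤ))

theorem headHom_image_quadSolutions_subset (a : ℤ) (q : Fin (d + 1) → ℤ) {b : ℤ}
    (hb : L.toAddSubgroup.map (headHom d) = AddSubgroup.zmultiples b) :
    headHom d '' quadSolutions L a q ⊆ {c | b ∣ c * c - a * c - q 0} := by
  rintro _ ⟨x, ⟨-, hx⟩, rfl⟩
  have hmem : headHom d (x * x - a • x - q) ∈ L.toAddSubgroup.map (headHom d) := ⟨_, hx, rfl⟩
  rw [hb, Int.mem_zmultiples_iff] at hmem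
  simpa using hmem

variable {L} in
theorem tail_mem_quadSolutions_comap {a : ℤ} {q q' x : Fin (d + 1) → ℤ}
    (hx : x ∈ quadSolutions L a q) (hqq' : q - q' ∈ L)
    (hhead : x 0 * x 0 - a * x 0 = q' 0) :
    Fin.tail x ∈ quadSolutions (L.comap (consZero d)) a (Fin.tail q') := by
  refine ⟨fun y hy => ?_, ?_⟩
  · have hmul : consZero d (Fin.tail x * y) = x * consZero d y := by
      ext i; cases i using Fin.cases <;> simp [Fin.tail]
    rw [NonUnitalSubring.mem_comap, hmul]
    exact hx.1 _ hy
  · have hzero : (x * x - a • x - q') 0 = 0 := by simp [hhead]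
    rw [NonUnitalSubring.mem_comap]
    change consZero d (Fin.tail (x * x - a • x - q')) ∈ L
    rw [consZero_tail hzero]
    simpa using add_mem hx.2 hqq'

theorem cosetCount_quadSolutions_fiber_le (a : ℤ) (q : Fin (d + 1) → ℤ) (c : ℤ) {k : ℕ}
    (hk : ∀ q', cosetCount (L.comap (consZero d)).toAddSubgroup
      (quadSolutions (L.comap (consZero d)) a q') ≤ k) :
    cosetCount L.toAddSubgroup {x ∈ quadSolutions L a q | headHom d x = c} ≤ k := by
  rcases Set.eq_empty_or_nonempty {x ∈ quadSolutions L a q | headHom d x = c} with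
    hempty | ⟨x₀, hx₀, rfl⟩
  · rw [hempty, cosetCount, Set.image_empty, Set.encard_empty]
    exact zero_le
  let q' := x₀ * x₀ - a • x₀
  refine (cosetCount_le_cosetCount_comap L.toAddSubgroup (consZeroHom d) (Pi.single 0 (x₀ 0))
    (T := quadSolutions (L.comap (consZero d)) a (Fin.tail q')) ?_).trans (hk _)
  rintro x ⟨hx, hxx₀⟩
  replace hxx₀ : x 0 = x₀ 0 := hxx₀
  refine ⟨Fin.tail x, tail_mem_quadSolutions_comap hx ?_ (by simp [q', hxx₀]), ?_⟩
  · simpa [q'] using neg_mem hx₀.2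
  · ext i
    cases i using Fin.cases <;> simp [Fin.tail, hxx₀]

theorem cosetCount_quadSolutions_succ_le (a : ℤ) (q : Fin (d + 1) → ℤ) {b : ℤ} {m k : ℕ}
    (hb : L.toAddSubgroup.map (headHom d) = AddSubgroup.zmultiples b)
    (hm : cosetCount (AddSubgroup.zmultiples b) {c | b ∣ c * c - a * c - q 0} ≤ m)
    (hk : ∀ q', cosetCount (L.comap (consZero d)).toAddSubgroup
      (quadSolutions (L.comap (consZero d)) a q') ≤ k) :
    cosetCount L.toAddSubgroup (quadSolutions L a q) ≤ (m * k : ℕ) := by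
  refine cosetCount_le_mul_of_map (headHom d) (fun x hx y hy => add_mem_quadSolutions hx hy) ?_
    fun c => cosetCount_quadSolutions_fiber_le L a q c hk
  rw [hb]
  exact (cosetCount_mono _ (headHom_image_quadSolutions_subset L a q hb)).trans hm

end QuadraticEquations

section LatticeCount

variable {d : ℕ}

/-- The exponent of `p` in the bound for the number of possible first rows of a multiplicatively
closed lattice whose Hermite diagonal is `p ^ k` followed by the powers `p ^ κ i`. -/
def rowCost (k : ℕ) : {d : ℕ} → (Fin d → ℕ) → ℕ
  | 0, _ => 0
  | _ + 1, κ => if k = 0 then 0 else min k (κ 0 / 2) + ∑ i, Fin.tail κ i / 2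

/-- The exponent of `p` in the bound for the number of multiplicatively closed lattices with
Hermite diagonal `p ^ κ i`. -/
def latticeCost : {d : ℕ} → (Fin d → ℕ) → ℕ
  | 0, _ => 0
  | _ + 1, κ => rowCost (κ 0) (Fin.tail κ) + latticeCost (Fin.tail κ)

theorem pow_add_one_sub_mem_of_mem_quadSolutions {G : Type*} [CommRing G] {L : NonUnitalSubring G}
    {x : G} (hx : x ∈ quadSolutions L 1 0) (N : ℕ) : x ^ (N + 1) - x ∈ L := by
  have hidem : x * x - x ∈ L := by simpa using hx.2
  induction N with
  | zero => simp
  | succ N ih =>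
    rw [show x ^ (N + 1 + 1) - x = x * (x ^ (N + 1) - x) + (x * x - x) by ring]
    exact add_mem (hx.1 _ ih) hidem

variable {p : ℕ}

-- A suitable power of every vector is congruent modulo `p ^ M` to a vector of zeros and ones.
theorem cosetCount_idempotents_le (hp : p.Prime) (L : NonUnitalSubring (Fin d → ℤ)) {M : ℕ}
    (hL : L.toAddSubgroup.index = p ^ M) :
    cosetCount L.toAddSubgroup (quadSolutions L 1 0) ≤ (2 ^ d : ℕ) := by
  let X : Finset (Fin d → ℤ) := Fintype.piFinset fun _ => {0, 1}
  have hX : #X = 2 ^ d := by simp [X]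
  refine hX ▸ cosetCount_le_card X fun x hx => ?_
  obtain ⟨N, hN⟩ := exists_pow_dvd_pow_or_pow_dvd_pow_sub_one hp M
  have hcoord (i : Fin d) : ∃ y ∈ ({0, 1} : Finset ℤ), (p : ℤ) ^ M ∣ x i ^ (N + 1) - y := by
    simpa using hN (x i)
  choose y hy u hu using hcoord
  refine ⟨y, Fintype.mem_piFinset.mpr hy, ?_⟩
  have hdecomp : x - y = (p ^ M : ℕ) • u - (x ^ (N + 1) - x) := by
    ext i
    simp only [Pi.sub_apply, Pi.pow_apply, Pi.smul_apply]
    linear_combination hu i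
  rw [hdecomp, ← hL]
  exact sub_mem (AddSubgroup.nsmul_index_mem _ u) (pow_add_one_sub_mem_of_mem_quadSolutions hx N)

theorem cosetCount_quadSolutions_le (hp : p.Prime) {L : NonUnitalSubring (Fin d → ℤ)}
    {κ : Fin d → ℕ} (hL : hermiteDiag L.toAddSubgroup = fun i => p ^ κ i) (a : ℤ) (q : Fin d → ℤ) :
    cosetCount L.toAddSubgroup (quadSolutions L a q) ≤ (2 ^ d * p ^ ∑ i, κ i / 2 : ℕ) := by
  induction d with
  | zero => simpa using cosetCount_le_one_of_subsingleton _ _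
  | succ d ih =>
    have hsucc := cosetCount_quadSolutions_succ_le L a q (map_headHom_eq_zmultiples hL)
      (cosetCount_quadratic_roots_le hp (κ 0) a (q 0))
      fun q' => ih (L := L.comap (consZero d)) (hermiteDiag_comap_consZeroHom hL) q'
    refine hsucc.trans_eq (congrArg _ ?_)
    rw [Fin.sum_univ_succ]
    ring

theorem cosetCount_quadSolutions_prime_pow_le (hp : p.Prime)
    {L : NonUnitalSubring (Fin d → ℤ)} {κ : Fin d → ℕ}
    (hL : hermiteDiag L.toAddSubgroup = fun i => p ^ κ i) (k : ℕ) :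
    cosetCount L.toAddSubgroup (quadSolutions L (p ^ k) 0) ≤ (2 ^ d * p ^ rowCost k κ : ℕ) := by
  cases d with
  | zero => simpa [rowCost] using cosetCount_le_one_of_subsingleton _ _
  | succ d =>
    rcases eq_or_ne k 0 with rfl | hk
    · rw [rowCost, if_pos rfl, pow_zero, pow_zero, mul_one]
      refine cosetCount_idempotents_le hp L (M := ∑ i, κ i) ?_
      rw [index_eq_prod_hermiteDiag, hL, prod_pow_eq_pow_sum]
    · have hroots := cosetCount_quadratic_roots_zero_le hp (κ 0) k
      have hsucc := cosetCount_quadSolutions_succ_le L (p ^ k) 0 (map_headHom_eq_zmultiples hL)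
        (by simpa only [Pi.zero_apply, sub_zero] using hroots)
        fun q' => cosetCount_quadSolutions_le hp (L := L.comap (consZero d))
          (hermiteDiag_comap_consZeroHom hL) (p ^ k) q'
      refine hsucc.trans_eq (congrArg _ ?_)
      rw [rowCost, if_neg hk]
      simp only [Fin.tail]
      ring

theorem eq_of_comap_consZero_eq {L L' : NonUnitalSubring (Fin (d + 1) → ℤ)} {b : ℤ}
    (hb : L.toAddSubgroup.map (headHom d) = AddSubgroup.zmultiples b)
    (hb' : L'.toAddSubgroup.map (headHom d) = AddSubgroup.zmultiples b)
    (hcomap : L.comap (consZero d) = L'.comap (consZero d)) {v v' : Fin (d + 1) → ℤ}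
    (hv : v ∈ L) (hv' : v' ∈ L') (hv0 : v 0 = b) (hv0' : v' 0 = b)
    (hsub : Fin.tail v - Fin.tail v' ∈ L.comap (consZero d)) : L = L' := by
  have hdiff : v - v' ∈ L := by
    rw [← consZero_tail (x := v - v') (by simp [hv0, hv0'])]
    exact hsub
  have hv'L : v' ∈ L := by simpa only [sub_sub_cancel] using sub_mem hv hdiff
  have hker := (range_consZeroHom d).ge
  have hcomap' : L.toAddSubgroup.comap (consZeroHom d) = L'.toAddSubgroup.comap (consZeroHom d) :=
    congrArg NonUnitalSubring.toAddSubgroup hcomap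
  apply NonUnitalSubring.toAddSubgroup_injective
  refine le_antisymm (le_of_comap_le_of_map_le_zmultiples hker hv'L hv' ?_ hcomap'.le)
    (le_of_comap_le_of_map_le_zmultiples hker hv' hv'L ?_ hcomap'.ge)
  · exact hb.trans_le (hv0' ▸ le_rfl)
  · exact hb'.trans_le (hv0' ▸ le_rfl)

-- Such a lattice is determined by its zero slice `L'` together with the class modulo `L'` of the
-- tail of any of its vectors with first coordinate `b`.
theorem encard_comap_consZero_fiber_le (b : ℤ) (L' : NonUnitalSubring (Fin d → ℤ)) :
    {L : NonUnitalSubring (Fin (d + 1) → ℤ) |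
      L.toAddSubgroup.map (headHom d) = AddSubgroup.zmultiples b ∧
        L.comap (consZero d) = L'}.encard ≤
    cosetCount L'.toAddSubgroup (quadSolutions L' b 0) := by
  have hexists (L : NonUnitalSubring (Fin (d + 1) → ℤ))
      (hL : L.toAddSubgroup.map (headHom d) = AddSubgroup.zmultiples b) : ∃ v ∈ L, v 0 = b := by
    obtain ⟨v, hv, hvb⟩ := hL.ge (AddSubgroup.mem_zmultiples b)
    exact ⟨v, hv, hvb⟩
  choose! v hv hvb using hexists
  refine Set.encard_le_encard_of_injOn (f := fun L => (Fin.tail (v L) : _ ⧸ L'.toAddSubgroup))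
    ?_ ?_
  · rintro L ⟨hL, rfl⟩
    have hmem : v L ∈ quadSolutions L b (v L * v L - b • v L) :=
      ⟨fun y hy => mul_mem (hv L hL) hy, by simp [zero_mem]⟩
    refine ⟨_, tail_mem_quadSolutions_comap (q' := 0) hmem ?_ (by simp [hvb L hL]), rfl⟩
    rw [sub_zero]
    exact sub_mem (mul_mem (hv L hL) (hv L hL)) (zsmul_mem (hv L hL) b)
  · rintro L₁ ⟨hL₁, rfl⟩ L₂ ⟨hL₂, hcomap⟩ heq
    exact eq_of_comap_consZero_eq hL₁ hL₂ hcomap.symm (hv _ hL₁) (hv _ hL₂) (hvb _ hL₁)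
      (hvb _ hL₂) (QuotientAddGroup.eq_iff_sub_mem.mp heq)

theorem encard_hermiteDiag_eq_le (hp : p.Prime) (κ : Fin d → ℕ) :
    {L : NonUnitalSubring (Fin d → ℤ) | hermiteDiag L.toAddSubgroup = fun i => p ^ κ i}.encard ≤
      (2 ^ (d * d) * p ^ latticeCost κ : ℕ) := by
  induction d with
  | zero =>
    refine (Set.encard_le_one_iff.mpr fun L L' _ _ => ?_).trans (by simp [latticeCost])
    ext x
    rw [Subsingleton.elim x 0]
    exact iff_of_true (zero_mem L) (zero_mem L')
  | succ d ih =>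
    have hcount := encard_le_mul_of_encard_fiber_le (f := fun L => L.comap (consZero d))
      (s := {L | hermiteDiag L.toAddSubgroup = fun i => p ^ κ i})
      (fun L hL => hermiteDiag_comap_consZeroHom hL) (ih (Fin.tail κ)) fun L' hL' =>
        (Set.encard_le_encard ?_).trans ((encard_comap_consZero_fiber_le _ L').trans
          (cosetCount_quadSolutions_prime_pow_le hp hL' (κ 0)))
    · refine hcount.trans (Nat.cast_le.mpr ?_)
      calc 2 ^ (d * d) * p ^ latticeCost (Fin.tail κ) * (2 ^ d * p ^ rowCost (κ 0) (Fin.tail κ))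
          = 2 ^ (d * d + d) * p ^ latticeCost κ := by rw [latticeCost]; ring
        _ ≤ 2 ^ ((d + 1) * (d + 1)) * p ^ latticeCost κ := by
          gcongr
          · norm_num
          · linarith
    · rintro L ⟨hL, rfl⟩
      exact ⟨by simpa using map_headHom_eq_zmultiples hL, rfl⟩

end LatticeCount

section LatticeCost

variable {d : ℕ}

theorem two_mul_rowCost_le_sum (k : ℕ) (κ : Fin d → ℕ) : 2 * rowCost k κ ≤ ∑ i, κ i := by
  cases d with
  | zero => simp [rowCost]
  | succ d =>
    have hhalf : 2 * ∑ i, Fin.tail κ i / 2 ≤ ∑ i, Fin.tail κ i := by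
      rw [mul_sum]
      exact sum_le_sum fun i _ => Nat.mul_div_le _ 2
    rw [Fin.sum_univ_succ, rowCost]
    change _ ≤ κ 0 + ∑ i, Fin.tail κ i
    split_ifs <;> omega

theorem four_mul_latticeCost_le (κ : Fin d → ℕ) :
    4 * latticeCost κ ≤ (∑ i, κ i) * (∑ i, κ i - 1) := by
  induction d with
  | zero => simp [latticeCost]
  | succ d ih =>
    have hrow := two_mul_rowCost_le_sum (κ 0) (Fin.tail κ)
    have hih := ih (Fin.tail κ)
    rw [Fin.sum_univ_succ, latticeCost]
    change _ ≤ (κ 0 + ∑ i, Fin.tail κ i) * (κ 0 + ∑ i, Fin.tail κ i - 1)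
    generalize ∑ i, Fin.tail κ i = s at *
    rcases Nat.eq_zero_or_pos (κ 0) with hκ | hκ
    · have hrow_zero : rowCost (κ 0) (Fin.tail κ) = 0 := by
        cases d <;> simp [rowCost, hκ]
      rw [hrow_zero]; simpa [hκ] using hih
    · have hmono : (s + 1) * s ≤ (κ 0 + s) * (κ 0 + s - 1) := Nat.mul_le_mul (by omega) (by omega)
      have hstep : s * (s - 1) + 2 * s = (s + 1) * s := by
        cases s with
        | zero => rfl
        | succ s => rw [Nat.add_sub_cancel]; ring
      omega

theorem rowCost_succ_le (k : ℕ) (κ : Fin (d + 1) → ℕ) :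
    rowCost k κ ≤ min k (κ 0 / 2) + ∑ i, Fin.tail κ i / 2 := by
  rw [rowCost]
  split_ifs
  · exact Nat.zero_le _
  · exact le_rfl

theorem six_mul_latticeCost_four_le (κ : Fin 4 → ℕ) : 6 * latticeCost κ ≤ 7 * ∑ i, κ i := by
  have hrow₀ := rowCost_succ_le (κ 0) (Fin.tail κ)
  have hrow₁ := rowCost_succ_le (κ 1) (Fin.tail (Fin.tail κ))
  have hrow₂ := rowCost_succ_le (κ 2) (Fin.tail (Fin.tail (Fin.tail κ)))
  simp only [Fin.sum_univ_succ, Fin.sum_univ_zero, Fin.tail, latticeCost, rowCost,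
    Fin.succ_zero_eq_one, Fin.succ_one_eq_two, Fin.reduceSucc, add_zero] at *
  omega

theorem six_mul_latticeCost_le {m : ℕ} (κ : Fin (m + 4) → ℕ) :
    6 * latticeCost κ ≤ (3 * m + 7) * ∑ i, κ i := by
  induction m with
  | zero => simpa using six_mul_latticeCost_four_le κ
  | succ m ih =>
    have hrow := two_mul_rowCost_le_sum (κ 0) (Fin.tail κ)
    have hih := ih (Fin.tail κ)
    rw [Fin.sum_univ_succ, latticeCost]
    change _ ≤ (3 * (m + 1) + 7) * (κ 0 + ∑ i, Fin.tail κ i)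
    nlinarith [Nat.zero_le (m * κ 0)]

-- The linear bound suffices for `6 ≤ ∑ i, κ i`, the quadratic one for `∑ i, κ i ≤ 5`.
theorem six_mul_latticeCost_add_six_le (hd : 4 ≤ d) (κ : Fin d → ℕ) (hκ : 1 ≤ ∑ i, κ i) :
    6 * latticeCost κ + 6 ≤ (3 * d - 4) * ∑ i, κ i := by
  obtain ⟨m, rfl⟩ := Nat.exists_eq_add_of_le' hd
  have hlinear := six_mul_latticeCost_le κ
  have hquadratic := four_mul_latticeCost_le κ
  rw [show 3 * (m + 4) - 4 = 3 * m + 8 by omega]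
  generalize ∑ i, κ i = s at *
  rcases le_or_gt 6 s with hs | hs
  · nlinarith
  · interval_cases s <;> omega

end LatticeCost

section PrimePowerIndex

theorem encard_sum_eq_le (d k : ℕ) : {κ : Fin d → ℕ | ∑ i, κ i = k}.encard ≤ ((k + 1) ^ d : ℕ) := by
  let box : Finset (Fin d → ℕ) := Fintype.piFinset fun _ => range (k + 1)
  have hbox : #box = (k + 1) ^ d := by simp [box]
  rw [← hbox, ← Set.encard_coe_eq_coe_finsetCard]
  refine Set.encard_le_encard fun κ hκ => mem_coe.mpr (Fintype.mem_piFinset.mpr fun i => ?_)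
  rw [mem_range, Nat.lt_succ_iff, ← hκ]
  exact single_le_sum_of_canonicallyOrdered (mem_univ i)

theorem exists_sum_eq_of_prod_eq_prime_pow {ι : Type*} [Fintype ι] {p k : ℕ} (hp : p.Prime)
    {δ : ι → ℕ} (hδ : ∏ i, δ i = p ^ k) : ∃ κ : ι → ℕ, ∑ i, κ i = k ∧ δ = fun i => p ^ κ i := by
  have hpow (i : ι) : ∃ m, δ i = p ^ m := by
    obtain ⟨m, -, hm⟩ := (Nat.dvd_prime_pow hp).mp
      (hδ ▸ dvd_prod_of_mem δ (mem_univ i))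
    exact ⟨m, hm⟩
  choose κ hκ using hpow
  refine ⟨κ, ?_, funext hκ⟩
  simp only [hκ, prod_pow_eq_pow_sum] at hδ
  exact Nat.pow_right_injective hp.two_le hδ

variable {d : ℕ}

theorem encard_nonUnitalSubring_prime_pow_index_le {p : ℕ} (hp : p.Prime) (k : ℕ) {K : ℕ}
    (hK : ∀ κ : Fin d → ℕ, ∑ i, κ i = k → 2 ^ (d * d) * p ^ latticeCost κ ≤ K) :
    {L : NonUnitalSubring (Fin d → ℤ) | L.toAddSubgroup.index = p ^ k}.encard ≤
      ((k + 1) ^ d * K : ℕ) := by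
  refine encard_le_mul_of_encard_fiber_le (f := fun L => hermiteDiag L.toAddSubgroup)
    (t := (fun κ i => p ^ κ i) '' {κ : Fin d → ℕ | ∑ i, κ i = k}) (fun L hL => ?_)
    ((Set.encard_image_le _ _).trans (encard_sum_eq_le d k)) ?_
  · obtain ⟨κ, hκ, hdiag⟩ := exists_sum_eq_of_prod_eq_prime_pow hp
      ((index_eq_prod_hermiteDiag L.toAddSubgroup).symm.trans hL)
    exact ⟨κ, hκ, hdiag.symm⟩
  · rintro _ ⟨κ, hκ, rfl⟩
    exact (Set.encard_le_encard fun L hL => hL.2).trans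
      ((encard_hermiteDiag_eq_le hp κ).trans (Nat.cast_le.mpr (hK κ hκ)))

/-- The non-unital subring of `ℤ^d` formed by the elements of `R` with vanishing first
coordinate. -/
def zeroSlice (R : Subring (Fin (d + 1) → ℤ)) : NonUnitalSubring (Fin d → ℤ) :=
  R.toNonUnitalSubring.comap (consZero d)

theorem map_headHom_subring (R : Subring (Fin (d + 1) → ℤ)) :
    R.toAddSubgroup.map (headHom d) = AddSubgroup.zmultiples 1 := by
  rw [Int.zmultiples_one, eq_top_iff]
  exact fun t _ => ⟨(t : Fin (d + 1) → ℤ), intCast_mem R t, by simp⟩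

theorem index_zeroSlice (R : Subring (Fin (d + 1) → ℤ)) :
    (zeroSlice R).toAddSubgroup.index = R.toAddSubgroup.index := by
  rw [index_eq_index_map_mul_index_comap (headHom_surjective d) (range_consZeroHom d),
    map_headHom_subring, Int.index_zmultiples, Int.natAbs_one, one_mul]
  rfl

theorem zeroSlice_injective : Injective (zeroSlice (d := d)) := fun R S h =>
  Subring.ext <| NonUnitalSubring.ext_iff.mp <|
    eq_of_comap_consZero_eq (map_headHom_subring R) (map_headHom_subring S) h (one_mem R)
      (one_mem S) rfl rfl (by rw [sub_self]; exact zero_mem _)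

theorem subringCount_prime_pow_le {p : ℕ} (hp : p.Prime) {k K : ℕ}
    (hK : ∀ κ : Fin d → ℕ, ∑ i, κ i = k → 2 ^ (d * d) * p ^ latticeCost κ ≤ K) :
    subringCount (d + 1) (p ^ k) ≤ (k + 1) ^ d * K := by
  have hinj : {R : Subring (Fin (d + 1) → ℤ) | R.toAddSubgroup.index = p ^ k}.encard ≤
      {L : NonUnitalSubring (Fin d → ℤ) | L.toAddSubgroup.index = p ^ k}.encard :=
    Set.encard_le_encard_of_injOn (fun R hR => (index_zeroSlice R).trans hR)
      zeroSlice_injective.injOn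
  exact (Set.encard_le_coe_iff_finite_ncard_le.mp
    (hinj.trans (encard_nonUnitalSubring_prime_pow_index_le hp k hK))).2

theorem subringCount_prime_pow_le_rpow (hd : 4 ≤ d) {p k : ℕ} (hp : p.Prime) (hk : 1 ≤ k) :
    (subringCount (d + 1) (p ^ k) : ℝ) ≤
      (k + 1) ^ d * (2 ^ (d * d) * (p : ℝ) ^ (((d + 1) / 2 - 7 / 6) * k - 1 : ℝ)) := by
  have hp1 : (1 : ℝ) ≤ p := by exact_mod_cast hp.one_le
  set e : ℝ := ((d + 1) / 2 - 7 / 6) * k - 1 with he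
  let K : ℕ := ⌊(2 ^ (d * d) * (p : ℝ) ^ e : ℝ)⌋₊
  have hcount : subringCount (d + 1) (p ^ k) ≤ (k + 1) ^ d * K := by
    refine subringCount_prime_pow_le hp fun κ hκ => Nat.le_floor ?_
    have hcost := six_mul_latticeCost_add_six_le hd κ (hκ ▸ hk)
    rw [hκ] at hcost
    push_cast
    gcongr
    rw [← Real.rpow_natCast]
    refine Real.rpow_le_rpow_of_exponent_le hp1 ?_
    have hcost' : ((6 * latticeCost κ + 6 : ℕ) : ℝ) ≤ (((3 * d - 4) * k : ℕ) : ℝ) := by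
      exact_mod_cast hcost
    rw [Nat.cast_mul, Nat.cast_sub (by omega)] at hcost'
    push_cast at hcost'
    linarith
  calc (subringCount (d + 1) (p ^ k) : ℝ) ≤ (k + 1) ^ d * K := by exact_mod_cast hcount
    _ ≤ (k + 1) ^ d * (2 ^ (d * d) * (p : ℝ) ^ e) := by
      gcongr
      exact Nat.floor_le (by positivity)

end PrimePowerIndex

section Submultiplicativity

variable {ι : Type*}

/-- Coordinatewise reduction of `ℤ^ι` modulo `m`. -/
abbrev reduceMod (ι : Type*) (m : ℕ) : (ι → ℤ) →+* (ι → ZMod m) :=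
  (Int.castRingHom (ZMod m)).compLeft ι

/-- The subring `R + m ℤ^ι`, encoded as the preimage of the reduction of `R` modulo `m`. -/
def modularHull (m : ℕ) (R : Subring (ι → ℤ)) : Subring (ι → ℤ) :=
  (R.map (reduceMod ι m)).comap (reduceMod ι m)

theorem reduceMod_surjective (m : ℕ) : Surjective (reduceMod ι m) :=
  (ZMod.intCast_surjective (n := m)).comp_left

theorem reduceMod_eq_zero_iff {m : ℕ} {x : ι → ℤ} :
    reduceMod ι m x = 0 ↔ ∃ y : ι → ℤ, x = m • y := by
  constructor
  · intro hx
    choose y hy using fun i => (ZMod.intCast_zmod_eq_zero_iff_dvd _ _).mp (congrFun hx i)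
    exact ⟨y, funext fun i => by simpa using hy i⟩
  · rintro ⟨y, rfl⟩
    ext i
    simp

theorem mem_modularHull {m : ℕ} {R : Subring (ι → ℤ)} {x : ι → ℤ} :
    x ∈ modularHull m R ↔ ∃ y ∈ R, ∃ z : ι → ℤ, x = y + m • z := by
  simp_rw [modularHull, Subring.mem_comap, Subring.mem_map, ← sub_eq_iff_eq_add',
    ← reduceMod_eq_zero_iff, map_sub, sub_eq_zero, eq_comm]

theorem le_modularHull (m : ℕ) (R : Subring (ι → ℤ)) : R ≤ modularHull m R :=
  fun x hx => ⟨x, hx, rfl⟩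

theorem index_modularHull_dvd_pow [Fintype ι] {m : ℕ} (hm : 0 < m) (R : Subring (ι → ℤ)) :
    (modularHull m R).toAddSubgroup.index ∣ m ^ Fintype.card ι := by
  have : NeZero m := ⟨hm.ne'⟩
  have hindex : (modularHull m R).toAddSubgroup.index =
      (R.map (reduceMod ι m)).toAddSubgroup.index :=
    AddSubgroup.index_comap_of_surjective (R.map (reduceMod ι m)).toAddSubgroup
      (f := (reduceMod ι m).toAddMonoidHom) (reduceMod_surjective m)
  have hcard : Nat.card (ι → ZMod m) = m ^ Fintype.card ι := by
    rw [Nat.card_fun, Nat.card_zmod, Nat.card_eq_fintype_card]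
  rw [hindex, ← hcard]
  exact AddSubgroup.index_dvd_card _

theorem modularHull_index_eq_self {r : ℕ} {R : Subring (ι → ℤ)} (hR : R.toAddSubgroup.index = r) :
    modularHull r R = R := by
  refine le_antisymm (fun x hx => ?_) (le_modularHull r R)
  obtain ⟨y, hy, z, rfl⟩ := mem_modularHull.mp hx
  exact add_mem hy (hR ▸ R.toAddSubgroup.nsmul_index_mem z)

theorem finite_subrings_of_index [Finite ι] {r : ℕ} (hr : 0 < r) :
    Finite {R : Subring (ι → ℤ) // R.toAddSubgroup.index = r} := by
  have : NeZero r := ⟨hr.ne'⟩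
  refine Finite.of_injective (fun R => (R.1.map (reduceMod ι r) : Set (ι → ZMod r))) ?_
  intro R S h
  rw [Subtype.ext_iff, ← modularHull_index_eq_self R.2, ← modularHull_index_eq_self S.2]
  exact congrArg (Subring.comap (reduceMod ι r)) (SetLike.coe_injective h)

-- If `x = y + a z = y' + b z'` and `u a + v b = 1`, then `x = u a x + v b x` is congruent to
-- `u a y' + v b y` modulo `a b`.
theorem modularHull_inf_modularHull {a b : ℕ} (hab : a.Coprime b) {R : Subring (ι → ℤ)}
    (hR : R.toAddSubgroup.index = a * b) : modularHull a R ⊓ modularHull b R = R := by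
  refine le_antisymm ?_ (le_inf (le_modularHull a R) (le_modularHull b R))
  rintro x ⟨hxa, hxb⟩
  obtain ⟨y, hy, z, hz⟩ := mem_modularHull.mp hxa
  obtain ⟨y', hy', z', hz'⟩ := mem_modularHull.mp hxb
  obtain ⟨u, v, huv⟩ := Nat.isCoprime_iff_coprime.mpr hab
  rw [← modularHull_index_eq_self hR]
  refine mem_modularHull.mpr ⟨(u * a) • y' + (v * b) • y, add_mem (zsmul_mem hy' _)
    (zsmul_mem hy _), u • z' + v • z, ?_⟩
  ext i
  have hxi := congrFun hz i
  have hxi' := congrFun hz' i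
  simp only [Pi.add_apply, Pi.smul_apply, smul_eq_mul, nsmul_eq_mul (α := ℤ)]
    at hxi hxi' ⊢
  push_cast
  linear_combination -x i * huv + u * a * hxi' + v * b * hxi

theorem index_modularHull_dvd [Finite ι] {a b : ℕ} (ha : 0 < a) (hab : a.Coprime b)
    {R : Subring (ι → ℤ)} (hR : R.toAddSubgroup.index = a * b) :
    (modularHull a R).toAddSubgroup.index ∣ a := by
  cases nonempty_fintype ι
  have hdvd_mul : (modularHull a R).toAddSubgroup.index ∣ a * b :=
    hR ▸ AddSubgroup.index_dvd_of_le (le_modularHull a R)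
  exact ((hab.pow_left _).coprime_dvd_left (index_modularHull_dvd_pow ha R)).dvd_of_dvd_mul_right
    hdvd_mul

theorem index_modularHull [Finite ι] {a b : ℕ} (ha : 0 < a) (hb : 0 < b) (hab : a.Coprime b)
    {R : Subring (ι → ℤ)} (hR : R.toAddSubgroup.index = a * b) :
    (modularHull a R).toAddSubgroup.index = a ∧ (modularHull b R).toAddSubgroup.index = b := by
  have hadvd := index_modularHull_dvd ha hab hR
  have hbdvd := index_modularHull_dvd hb hab.symm (hR.trans (mul_comm a b))
  have hle := Nat.le_of_dvd ha hadvd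
  have hle' := Nat.le_of_dvd hb hbdvd
  have hinf : (modularHull a R).toAddSubgroup ⊓ (modularHull b R).toAddSubgroup =
      R.toAddSubgroup :=
    congrArg Subring.toAddSubgroup (modularHull_inf_modularHull hab hR)
  have hge : a * b ≤
      (modularHull a R).toAddSubgroup.index * (modularHull b R).toAddSubgroup.index :=
    hR ▸ hinf ▸ AddSubgroup.index_inf_le
  exact (mul_eq_mul_iff_eq_and_eq_of_pos hle hle' (Nat.pos_of_dvd_of_pos hadvd ha) hb).mp
    (le_antisymm (Nat.mul_le_mul hle hle') hge)

theorem subringCount_one_le (n : ℕ) : subringCount n 1 ≤ 1 := by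
  have : Subsingleton {R : Subring (Fin n → ℤ) // R.toAddSubgroup.index = 1} :=
    ⟨fun R S => Subtype.ext <| Subring.toAddSubgroup_injective <|
      (AddSubgroup.index_eq_one.mp R.2).trans (AddSubgroup.index_eq_one.mp S.2).symm⟩
  exact Finite.card_le_one_iff_subsingleton.mpr this

theorem subringCount_mul_le (n : ℕ) {a b : ℕ} (ha : 0 < a) (hb : 0 < b) (hab : a.Coprime b) :
    subringCount n (a * b) ≤ subringCount n a * subringCount n b := by
  have := finite_subrings_of_index (ι := Fin n) ha
  have := finite_subrings_of_index (ι := Fin n) hb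
  rw [subringCount, subringCount, subringCount, ← Nat.card_prod]
  refine Nat.card_le_card_of_injective (fun R => (⟨modularHull a R.1, ?_⟩, ⟨modularHull b R.1, ?_⟩))
    fun R S h => ?_
  · exact (index_modularHull ha hb hab R.2).1
  · exact (index_modularHull ha hb hab R.2).2
  · simp only [Prod.mk.injEq, Subtype.mk.injEq] at h
    rw [Subtype.ext_iff, ← modularHull_inf_modularHull hab R.2,
      ← modularHull_inf_modularHull hab S.2, h.1, h.2]

end Submultiplicativity

section EulerProduct

/-- The multiplicative function that agrees with `f` on prime powers. -/
noncomputable def eulerMajorant (f : ℕ → ℝ) (r : ℕ) : ℝ :=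
  r.factorization.prod fun p k => f (p ^ k)

variable {f : ℕ → ℝ}

theorem eulerMajorant_one (f : ℕ → ℝ) : eulerMajorant f 1 = 1 := by
  simp [eulerMajorant]

theorem eulerMajorant_prime_pow_succ (f : ℕ → ℝ) {p : ℕ} (hp : p.Prime) (k : ℕ) :
    eulerMajorant f (p ^ (k + 1)) = f (p ^ (k + 1)) := by
  rw [eulerMajorant, hp.factorization_pow, Finsupp.prod, Finsupp.support_single _ k.succ_ne_zero,
    prod_singleton, Finsupp.single_eq_same]

theorem eulerMajorant_mul (f : ℕ → ℝ) {a b : ℕ} (hab : a.Coprime b) :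
    eulerMajorant f (a * b) = eulerMajorant f a * eulerMajorant f b := by
  rw [eulerMajorant, Nat.factorization_mul_of_coprime hab, Finsupp.prod_add_index_of_disjoint]
  · rfl
  · simpa using hab.disjoint_primeFactors

theorem eulerMajorant_nonneg (hf : ∀ r, 0 ≤ f r) (r : ℕ) : 0 ≤ eulerMajorant f r := by
  rw [eulerMajorant, Finsupp.prod]
  exact prod_nonneg fun _ _ => hf _

theorem le_eulerMajorant (hf : ∀ r, 0 ≤ f r) (hone : f 1 ≤ 1)
    (hmul : ∀ a b, 0 < a → 0 < b → a.Coprime b → f (a * b) ≤ f a * f b) {r : ℕ} (hr : r ≠ 0) :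
    f r ≤ eulerMajorant f r := by
  induction r using Nat.recOnPosPrimePosCoprime with
  | zero => exact (hr rfl).elim
  | one => rwa [eulerMajorant_one]
  | prime_pow p k hp hk =>
    obtain ⟨k, rfl⟩ := Nat.exists_eq_succ_of_ne_zero hk.ne'
    exact (eulerMajorant_prime_pow_succ f hp k).ge
  | coprime a b ha hb hab iha ihb =>
    rw [eulerMajorant_mul f hab]
    exact (hmul a b (by omega) (by omega) hab).trans
      (mul_le_mul (iha (by omega)) (ihb (by omega)) (hf b) (eulerMajorant_nonneg hf a))

theorem sum_Icc_le_prod_primesBelow (hf : ∀ r, 0 ≤ f r) (hone : f 1 = 1)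
    (hmul : ∀ {a b : ℕ}, a.Coprime b → f (a * b) = f a * f b)
    (hsum : ∀ {p : ℕ}, p.Prime → Summable fun k => f (p ^ k)) (B : ℕ) :
    ∑ r ∈ Icc 1 B, f r ≤ ∏ p ∈ (B + 1).primesBelow, ∑' k, f (p ^ k) := by
  have heuler := (EulerProduct.summable_and_hasSum_smoothNumbers_prod_primesBelow_tsum hone hmul
    (fun hp => (hsum hp).norm) (B + 1)).2
  have hsmooth : ∀ r ∈ Icc 1 B, r ∈ (B + 1).smoothNumbers := fun r hr =>
    Nat.mem_smoothNumbers_of_lt (mem_Icc.mp hr).1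
      (Nat.lt_succ_of_le (mem_Icc.mp hr).2)
  calc ∑ r ∈ Icc 1 B, f r
      = ∑ r ∈ (Icc 1 B).subtype (· ∈ (B + 1).smoothNumbers), f r :=
        (sum_subtype_of_mem f hsmooth).symm
    _ ≤ ∑' r : (B + 1).smoothNumbers, f r := heuler.summable.sum_le_tsum _ fun r _ => hf r
    _ = ∏ p ∈ (B + 1).primesBelow, ∑' k, f (p ^ k) := heuler.tsum_eq

theorem sum_Icc_le_exp_tsum_of_submultiplicative (hf : ∀ r, 0 ≤ f r) (hone : f 1 ≤ 1)
    (hmul : ∀ a b, 0 < a → 0 < b → a.Coprime b → f (a * b) ≤ f a * f b) {u : ℕ → ℝ}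
    (hu : Summable u) (hu0 : ∀ m, 0 ≤ u m)
    (hsum : ∀ p : ℕ, p.Prime → Summable fun k => f (p ^ (k + 1)))
    (hlocal : ∀ p : ℕ, p.Prime → ∑' k, f (p ^ (k + 1)) ≤ u p) (B : ℕ) :
    ∑ r ∈ Icc 1 B, f r ≤ Real.exp (∑' m, u m) := by
  have hsum' {p : ℕ} (hp : p.Prime) : Summable fun k => eulerMajorant f (p ^ k) := by
    rw [← summable_nat_add_iff 1]
    exact (hsum p hp).congr fun k => (eulerMajorant_prime_pow_succ f hp k).symm
  have hfactor : ∀ p ∈ (B + 1).primesBelow, ∑' k, eulerMajorant f (p ^ k) ≤ Real.exp (u p) := by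
    intro p hp
    have hp' := Nat.prime_of_mem_primesBelow hp
    rw [(hsum' hp').tsum_eq_zero_add, pow_zero, eulerMajorant_one, add_comm]
    simp_rw [eulerMajorant_prime_pow_succ f hp']
    exact (add_le_add_left (hlocal p hp') 1).trans (Real.add_one_le_exp _)
  calc ∑ r ∈ Icc 1 B, f r
      ≤ ∑ r ∈ Icc 1 B, eulerMajorant f r := sum_le_sum fun r hr =>
        le_eulerMajorant hf hone hmul (Nat.one_le_iff_ne_zero.mp (mem_Icc.mp hr).1)
    _ ≤ ∏ p ∈ (B + 1).primesBelow, ∑' k, eulerMajorant f (p ^ k) :=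
      sum_Icc_le_prod_primesBelow (eulerMajorant_nonneg hf) (eulerMajorant_one f)
        (eulerMajorant_mul f) hsum' B
    _ ≤ ∏ p ∈ (B + 1).primesBelow, Real.exp (u p) :=
      prod_le_prod (fun p _ => tsum_nonneg fun k => eulerMajorant_nonneg hf _) hfactor
    _ = Real.exp (∑ p ∈ (B + 1).primesBelow, u p) := (Real.exp_sum _ _).symm
    _ ≤ Real.exp (∑' m, u m) := Real.exp_le_exp.mpr (hu.sum_le_tsum _ fun m _ => hu0 m)

end EulerProduct

section UpperBound

variable {d : ℕ} {ε : ℝ}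

theorem summable_add_two_pow_mul_geometric (d : ℕ) {ρ : ℝ} (hρ0 : 0 < ρ) (hρ1 : ρ < 1) :
    Summable fun k : ℕ => ((k : ℝ) + 2) ^ d * ρ ^ k := by
  have hgeom := summable_pow_mul_geometric_of_norm_lt_one d (r := ρ)
    (by rwa [Real.norm_of_nonneg hρ0.le])
  refine (((summable_nat_add_iff 2).mpr hgeom).mul_left (ρ ^ 2)⁻¹).congr fun k => ?_
  push_cast
  field_simp
  ring

theorem subringCount_prime_pow_mul_rpow_le (hd : 4 ≤ d) (hε : 0 < ε) {p : ℕ} (hp : p.Prime)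
    (k : ℕ) :
    (subringCount (d + 1) (p ^ (k + 1)) : ℝ) *
        ((p ^ (k + 1) : ℕ) : ℝ) ^ (-((d + 1) / 2 - 7 / 6 + ε) : ℝ) ≤
      2 ^ (d * d) * (p : ℝ) ^ (-(1 + ε)) * ((k + 2) ^ d * ((2 : ℝ) ^ (-ε)) ^ k) := by
  have hp0 : (0 : ℝ) < p := by exact_mod_cast hp.pos
  have hcount := subringCount_prime_pow_le_rpow hd hp (Nat.le_add_left 1 k)
  push_cast at hcount ⊢
  have hexp : (p : ℝ) ^ (((d + 1) / 2 - 7 / 6) * (k + 1) - 1 : ℝ) *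
      ((p : ℝ) ^ (k + 1)) ^ (-((d + 1) / 2 - 7 / 6 + ε) : ℝ) =
      (p : ℝ) ^ (-(1 + ε)) * ((p : ℝ) ^ (-ε)) ^ k := by
    rw [← Real.rpow_natCast p (k + 1), ← Real.rpow_mul hp0.le, ← Real.rpow_add hp0,
      ← Real.rpow_natCast _ k, ← Real.rpow_mul hp0.le, ← Real.rpow_add hp0]
    push_cast
    ring_nf
  have hbase : (p : ℝ) ^ (-ε) ≤ 2 ^ (-ε) :=
    Real.rpow_le_rpow_of_nonpos two_pos (by exact_mod_cast hp.two_le) (by linarith)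
  calc _ ≤ ((k + 1 : ℝ) + 1) ^ d *
          (2 ^ (d * d) * (p : ℝ) ^ (((d + 1) / 2 - 7 / 6) * (k + 1) - 1 : ℝ)) *
          ((p : ℝ) ^ (k + 1)) ^ (-((d + 1) / 2 - 7 / 6 + ε) : ℝ) := by gcongr
    _ = 2 ^ (d * d) * (p : ℝ) ^ (-(1 + ε)) * ((k + 2) ^ d * ((p : ℝ) ^ (-ε)) ^ k) := by
      linear_combination (k + 2 : ℝ) ^ d * 2 ^ (d * d) * hexp
    _ ≤ 2 ^ (d * d) * (p : ℝ) ^ (-(1 + ε)) * ((k + 2) ^ d * ((2 : ℝ) ^ (-ε)) ^ k) := by gcongr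

theorem exists_sum_subringCount_mul_rpow_le (hd : 4 ≤ d) (hε : 0 < ε) : ∃ C : ℝ, 0 < C ∧ ∀ B : ℕ,
    ∑ r ∈ Icc 1 B,
      (subringCount (d + 1) r : ℝ) * (r : ℝ) ^ (-((d + 1) / 2 - 7 / 6 + ε) : ℝ) ≤ C := by
  let g : ℕ → ℝ := fun k => (k + 2) ^ d * ((2 : ℝ) ^ (-ε)) ^ k
  have hg : Summable g := summable_add_two_pow_mul_geometric d (by positivity)
    (Real.rpow_lt_one_of_one_lt_of_neg one_lt_two (by linarith))
  have hu : Summable fun m : ℕ => 2 ^ (d * d) * (m : ℝ) ^ (-(1 + ε)) * ∑' k, g k :=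
    ((Real.summable_nat_rpow.mpr (by linarith)).mul_left _).mul_right _
  have hlocal {p : ℕ} (hp : p.Prime) := subringCount_prime_pow_mul_rpow_le hd hε hp
  have hsum {p : ℕ} (hp : p.Prime) := Summable.of_nonneg_of_le (fun k => by positivity)
    (hlocal hp) (hg.mul_left _)
  refine ⟨_, Real.exp_pos _, sum_Icc_le_exp_tsum_of_submultiplicative (fun r => by positivity)
    ?_ (fun a b ha hb hab => ?_) hu (fun m => ?_) (fun p hp => hsum hp) fun p hp => ?_⟩
  · simpa using subringCount_one_le (d + 1)
  · rw [Nat.cast_mul a b, Real.mul_rpow (Nat.cast_nonneg a) (Nat.cast_nonneg b),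
      mul_mul_mul_comm]
    gcongr
    exact_mod_cast subringCount_mul_le (d + 1) ha hb hab
  · have : 0 ≤ ∑' k, g k := tsum_nonneg fun k => by positivity
    positivity
  · exact ((hsum hp).tsum_le_tsum (hlocal hp) (hg.mul_left _)).trans_eq tsum_mul_left

theorem exists_subringCountUpTo_le {n : ℕ} (hn : 5 ≤ n) (hε : 0 < ε) :
    ∃ C : ℝ, 0 < C ∧ ∀ B : ℕ,
      (subringCountUpTo n B : ℝ) ≤ C * (B : ℝ) ^ ((n : ℝ) / 2 - 7 / 6 + ε) := by
  obtain ⟨d, rfl⟩ := Nat.exists_eq_add_of_le' (by omega : 1 ≤ n)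
  obtain ⟨C, hC, hbound⟩ := exists_sum_subringCount_mul_rpow_le (d := d) (by omega) hε
  refine ⟨C, hC, fun B => ?_⟩
  push_cast
  set s : ℝ := (d + 1) / 2 - 7 / 6 + ε with hs
  have hs0 : 0 ≤ s := by
    have : (5 : ℝ) ≤ (d + 1 : ℕ) := by exact_mod_cast hn
    push_cast at this
    linarith
  rw [subringCountUpTo, Nat.cast_sum]
  refine le_trans ?_ (mul_le_mul_of_nonneg_right (hbound B) (by positivity))
  rw [sum_mul]
  refine sum_le_sum fun r hr => ?_
  obtain ⟨hr1, hrB⟩ := mem_Icc.mp hr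
  have hr0 : (0 : ℝ) < r := by exact_mod_cast hr1
  have hrpow : (r : ℝ) ^ s ≤ (B : ℝ) ^ s :=
    Real.rpow_le_rpow hr0.le (by exact_mod_cast hrB) hs0
  calc (subringCount (d + 1) r : ℝ)
      = subringCount (d + 1) r * (r : ℝ) ^ (-s) * (r : ℝ) ^ s := by
        rw [mul_assoc, ← Real.rpow_add hr0, neg_add_cancel, Real.rpow_zero, mul_one]
    _ ≤ subringCount (d + 1) r * (r : ℝ) ^ (-s) * (B : ℝ) ^ s := by gcongr

end UpperBound

section Progression

/-- The `t`-th term of the progression of positive integers congruent to `1` modulo `Q`. -/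
def progression (Q t : ℕ) : ℕ := 1 + Q * t

variable {Q : ℕ}

theorem progression_pos (Q t : ℕ) : 0 < progression Q t :=
  Nat.add_pos_left one_pos _

theorem progression_le_mul (hQ : 0 < Q) {t T : ℕ} (ht : t < T) : progression Q t ≤ Q * T :=
  calc 1 + Q * t ≤ Q * (t + 1) := by rw [mul_add_one]; omega
    _ ≤ Q * T := Nat.mul_le_mul_left Q ht

theorem progression_injective (hQ : 0 < Q) : Injective (progression Q) := fun _ _ h =>
  Nat.eq_of_mul_eq_mul_left hQ (Nat.add_left_cancel h)

theorem coprime_of_dvd_progression {g t : ℕ} (hg : g ∣ progression Q t) : g.Coprime Q :=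
  Nat.Coprime.coprime_dvd_left hg (by simp [progression])

theorem lt_of_dvd_progression_factorial {z g t : ℕ} (hg : g ∣ progression z.factorial t)
    (hg1 : g ≠ 1) : z < g := by
  by_contra! hgz
  have hpos : 0 < g := Nat.pos_of_dvd_of_pos hg (progression_pos _ t)
  exact hg1 ((coprime_of_dvd_progression hg).eq_one_of_dvd (Nat.dvd_factorial hpos hgz))

theorem mul_progression_div_le {g t : ℕ} (hg : g ∣ progression Q t) :
    g * progression Q (t / g) ≤ progression Q t := by
  have hsplit : progression Q t = progression Q (t % g) + g * (Q * (t / g)) := by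
    conv_lhs => rw [progression, ← Nat.mod_add_div t g]
    rw [progression]
    ring
  have hrem : g ≤ progression Q (t % g) := Nat.le_of_dvd (progression_pos _ _)
    ((Nat.dvd_add_left (dvd_mul_right g _)).mp (hsplit ▸ hg))
  rw [hsplit, progression, mul_add, mul_one]
  exact Nat.add_le_add_right hrem _

theorem injOn_div_of_dvd_progression (Q g : ℕ) :
    Set.InjOn (· / g) {t | g ∣ progression Q t} := by
  intro s hs t ht hdiv
  have hmod : progression Q s ≡ progression Q t [MOD g] :=
    (Nat.modEq_zero_iff_dvd.mpr hs).trans (Nat.modEq_zero_iff_dvd.mpr ht).symm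
  have hmod' : s % g = t % g :=
    (Nat.ModEq.add_left_cancel' 1 hmod).cancel_left_of_coprime (coprime_of_dvd_progression hs)
  rw [← Nat.mod_add_div s g, ← Nat.mod_add_div t g, hmod']
  exact congrArg (fun q => t % g + g * q) hdiv

theorem card_filter_dvd_progression_le (Q U g : ℕ) :
    #{t ∈ range U | g ∣ progression Q t} ≤ U / g + 1 := by
  rw [← card_range (U / g + 1)]
  refine card_le_card_of_injOn (· / g) (fun t ht => ?_) fun s hs t ht h =>
    injOn_div_of_dvd_progression Q g (mem_filter.mp hs).2 (mem_filter.mp ht).2 h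
  exact mem_range_succ_iff.mpr (Nat.div_le_div_right (mem_range.mp (mem_filter.mp ht).1).le)

/-- The sum of the reciprocals of the first `T` terms of `progression Q`. -/
noncomputable def reciprocalSum (Q T : ℕ) : ℝ := ∑ t ∈ range T, (progression Q t : ℝ)⁻¹

theorem reciprocalSum_nonneg (Q T : ℕ) : 0 ≤ reciprocalSum Q T :=
  sum_nonneg fun _ _ => by positivity

theorem log_div_le_reciprocalSum (hQ : 0 < Q) (T : ℕ) :
    Real.log (T + 1) / Q ≤ reciprocalSum Q T := by
  have hlog : Real.log (T + 1) ≤ harmonic T := by exact_mod_cast log_add_one_le_harmonic T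
  have hQ1 : (1 : ℝ) ≤ Q := by exact_mod_cast hQ
  calc Real.log (T + 1) / Q ≤ harmonic T / Q := by gcongr
    _ = ∑ t ∈ range T, ((Q : ℝ) * (t + 1))⁻¹ := by
      rw [harmonic]
      push_cast
      simp_rw [sum_div, div_eq_mul_inv, mul_inv, mul_comm]
    _ ≤ reciprocalSum Q T := by
      refine sum_le_sum fun t _ => inv_anti₀ (by exact_mod_cast progression_pos Q t) ?_
      rw [progression]
      push_cast
      linarith

theorem inv_mul_log_le_reciprocalSum (hQ : 0 < Q) {M T B : ℕ} (hM : M ≠ 0) (hB : 0 < B)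
    (hBT : B ≤ (T + 1) ^ M) : (M * Q : ℝ)⁻¹ * Real.log B ≤ reciprocalSum Q T := by
  have hlog : Real.log B ≤ M * Real.log (T + 1) := by
    rw [← Real.log_pow]
    exact Real.log_le_log (by exact_mod_cast hB) (by exact_mod_cast hBT)
  calc (M * Q : ℝ)⁻¹ * Real.log B ≤ (M * Q : ℝ)⁻¹ * (M * Real.log (T + 1)) := by gcongr
    _ = Real.log (T + 1) / Q := by field_simp
    _ ≤ reciprocalSum Q T := log_div_le_reciprocalSum hQ T

-- The terms divisible by `g` are at least `g` times distinct terms of the progression.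
theorem sum_filter_dvd_inv_progression_le (Q T : ℕ) {g : ℕ} (hg : 0 < g) :
    ∑ t ∈ range T with g ∣ progression Q t, (progression Q t : ℝ)⁻¹ ≤
      reciprocalSum Q T * (g : ℝ)⁻¹ := by
  have hinj : Set.InjOn (· / g) (SetLike.coe {t ∈ range T | g ∣ progression Q t}) :=
    (injOn_div_of_dvd_progression Q g).mono fun t ht => (mem_filter.mp ht).2
  have hsub : ({t ∈ range T | g ∣ progression Q t}.image (· / g)) ⊆ range T :=
    image_subset_iff.mpr fun t ht => mem_range.mpr
      ((Nat.div_le_self t g).trans_lt (mem_range.mp (mem_filter.mp ht).1))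
  calc ∑ t ∈ range T with g ∣ progression Q t, (progression Q t : ℝ)⁻¹
      ≤ ∑ t ∈ range T with g ∣ progression Q t, (progression Q (t / g) : ℝ)⁻¹ * (g : ℝ)⁻¹ := by
        refine sum_le_sum fun t ht => ?_
        have hpos : 0 < g * progression Q (t / g) := Nat.mul_pos hg (progression_pos _ _)
        rw [← mul_inv, mul_comm]
        exact inv_anti₀ (by exact_mod_cast hpos)
          (by exact_mod_cast mul_progression_div_le (mem_filter.mp ht).2)
    _ = (∑ s ∈ {t ∈ range T | g ∣ progression Q t}.image (· / g), (progression Q s : ℝ)⁻¹) *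
          (g : ℝ)⁻¹ := by
        rw [sum_image hinj, sum_mul]
    _ ≤ reciprocalSum Q T * (g : ℝ)⁻¹ := by
        gcongr
        exact sum_le_sum_of_subset_of_nonneg hsub fun _ _ _ => by positivity

end Progression

section SharedDivisors

variable {ι : Type*} {z Y : ℕ} {t : ι → ℕ}

/-- The sum of `g ^ (-a)` over the `g ∈ (z, Y]` that divide every `m i` with `i ∈ D`. -/
noncomputable def sharedDivisorSum (z Y a : ℕ) (D : Finset ι) (m : ι → ℕ) : ℝ :=
  ∑ g ∈ Ioc z Y with ∀ i ∈ D, g ∣ m i, (g : ℝ)⁻¹ ^ a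

theorem sharedDivisorSum_nonneg (z Y a : ℕ) (D : Finset ι) (m : ι → ℕ) :
    0 ≤ sharedDivisorSum z Y a D m :=
  sum_nonneg fun _ _ => by positivity

theorem gcd_progression_mem_Ioc {s b : ℕ} (hY : progression z.factorial s ≤ Y)
    (h : ¬(progression z.factorial s).Coprime b) :
    (progression z.factorial s).gcd b ∈ Ioc z Y :=
  mem_Ioc.mpr ⟨lt_of_dvd_progression_factorial (Nat.gcd_dvd_left _ _) h,
    (Nat.le_of_dvd (progression_pos _ _) (Nat.gcd_dvd_left _ _)).trans hY⟩

theorem one_le_sharedDivisorSum [DecidableEq ι] {i j : ι} (hY : progression z.factorial (t i) ≤ Y)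
    (h : ¬(progression z.factorial (t i)).Coprime (progression z.factorial (t j))) :
    1 ≤ sharedDivisorSum z Y 0 {i, j} (progression z.factorial ∘ t) := by
  have hmem : (progression z.factorial (t i)).gcd (progression z.factorial (t j)) ∈
      {g ∈ Ioc z Y | ∀ l ∈ ({i, j} : Finset ι), g ∣ (progression z.factorial ∘ t) l} :=
    mem_filter.mpr ⟨gcd_progression_mem_Ioc hY h, by
      simp [Nat.gcd_dvd_left, Nat.gcd_dvd_right]⟩
  exact (pow_zero _).ge.trans
    (single_le_sum (f := fun g : ℕ => (g : ℝ)⁻¹ ^ 0) (fun g _ => by positivity) hmem)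

theorem card_not_coprime_le {i : ι} (hY : progression z.factorial (t i) ≤ Y) {U : ℕ} {w : ℝ}
    (hUw : (U : ℝ) ≤ w) (hYw : (Y : ℝ) ≤ w) :
    (#{u ∈ range U | ¬(progression z.factorial (t i)).Coprime (progression z.factorial u)} : ℝ) ≤
      2 * w * sharedDivisorSum z Y 1 {i} (progression z.factorial ∘ t) := by
  set Q := z.factorial with hQ
  have hcover : {u ∈ range U | ¬(progression Q (t i)).Coprime (progression Q u)} ⊆
      {g ∈ Ioc z Y | ∀ l ∈ ({i} : Finset ι), g ∣ (progression Q ∘ t) l}.biUnion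
        fun g => {u ∈ range U | g ∣ progression Q u} := by
    intro u hu
    obtain ⟨huU, hcop⟩ := mem_filter.mp hu
    exact mem_biUnion.mpr ⟨_, mem_filter.mpr ⟨gcd_progression_mem_Ioc hY hcop, by
      simp [Nat.gcd_dvd_left, ← hQ]⟩, mem_filter.mpr ⟨huU, Nat.gcd_dvd_right _ _⟩⟩
  have hcount {g : ℕ} (hg : g ∈ Ioc z Y) :
      (#{u ∈ range U | g ∣ progression Q u} : ℝ) ≤ 2 * w * (g : ℝ)⁻¹ ^ 1 := by
    have hg0 : (0 : ℝ) < g := by exact_mod_cast (Nat.zero_le z).trans_lt (mem_Ioc.mp hg).1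
    have hgw : (g : ℝ) ≤ w := le_trans (by exact_mod_cast (mem_Ioc.mp hg).2) hYw
    calc (#{u ∈ range U | g ∣ progression Q u} : ℝ) ≤ (U / g : ℕ) + 1 := by
          exact_mod_cast card_filter_dvd_progression_le Q U g
      _ ≤ w / g + w / g := add_le_add (Nat.cast_div_le.trans (by gcongr))
          ((one_le_div hg0).mpr hgw)
      _ = 2 * w * (g : ℝ)⁻¹ ^ 1 := by ring
  calc (#{u ∈ range U | ¬(progression Q (t i)).Coprime (progression Q u)} : ℝ)
      ≤ ∑ g ∈ Ioc z Y with ∀ l ∈ ({i} : Finset ι), g ∣ (progression Q ∘ t) l,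
          (#{u ∈ range U | g ∣ progression Q u} : ℝ) := by
        exact_mod_cast (card_le_card hcover).trans card_biUnion_le
    _ ≤ 2 * w * sharedDivisorSum z Y 1 {i} (progression Q ∘ t) := by
        rw [sharedDivisorSum, mul_sum]
        exact sum_le_sum fun g hg => hcount (mem_filter.mp hg).1

open Classical in
/-- The indices `u < U` whose term of `progression Q` extends the terms with indices `t i` to a
pairwise coprime family. -/
noncomputable def coprimeExtensions (Q U : ℕ) (t : ι → ℕ) : Finset ℕ :=
  {u ∈ range U | Pairwise (Nat.Coprime on fun o : Option ι =>
    o.elim (progression Q u) (progression Q ∘ t))}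

theorem mem_coprimeExtensions {Q U u : ℕ} : u ∈ coprimeExtensions Q U t ↔ u < U ∧
    Pairwise (Nat.Coprime on fun o : Option ι =>
      o.elim (progression Q u) (progression Q ∘ t)) := by
  simp only [coprimeExtensions, mem_filter, mem_range]

theorem pairwise_coprime_option_elim {m : ι → ℕ} {b : ℕ} (hm : Pairwise (Nat.Coprime on m))
    (hb : ∀ i, (m i).Coprime b) : Pairwise (Nat.Coprime on fun o : Option ι => o.elim b m)
  | none, none, h => (h rfl).elim
  | none, some j, _ => (hb j).symm
  | some i, none, _ => hb i
  | some _, some _, h => hm fun hij => h (congrArg some hij)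

end SharedDivisors

section CoprimeTuples

variable {ι : Type*} [Fintype ι]

open Classical in
/-- The tuples of pairwise coprime positive integers with product at most `B`. -/
noncomputable def coprimeTuples (ι : Type*) [Fintype ι] (B : ℕ) : Finset (ι → ℕ) :=
  {m ∈ Fintype.piFinset fun _ => Icc 1 B | Pairwise (Nat.Coprime on m) ∧ ∏ i, m i ≤ B}

theorem mem_coprimeTuples {B : ℕ} {m : ι → ℕ} :
    m ∈ coprimeTuples ι B ↔
      (∀ i, 0 < m i) ∧ Pairwise (Nat.Coprime on m) ∧ ∏ i, m i ≤ B := by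
  simp only [coprimeTuples, mem_filter, Fintype.mem_piFinset, mem_Icc]
  refine ⟨fun ⟨hmem, hm⟩ => ⟨fun i => (hmem i).1, hm⟩, fun ⟨hpos, hm⟩ =>
    ⟨fun i => ⟨hpos i, ?_⟩, hm⟩⟩
  exact (single_le_prod' (fun j _ => hpos j) (mem_univ i)).trans hm.2

theorem card_coprimeTuples_congr {κ : Type*} [Fintype κ] (σ : ι ≃ κ) (B : ℕ) :
    #(coprimeTuples ι B) = #(coprimeTuples κ B) := by
  refine card_equiv (σ.arrowCongr (Equiv.refl ℕ)) fun m => ?_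
  have hcomp : σ.arrowCongr (Equiv.refl ℕ) m = m ∘ σ.symm := rfl
  rw [mem_coprimeTuples, mem_coprimeTuples, hcomp]
  refine and_congr ?_ (and_congr ?_ ?_)
  · exact σ.symm.forall_congr_right.symm
  · exact ⟨fun h => h.comp_of_injective σ.symm.injective, fun h i j hij => by
      simpa [onFun] using h (σ.injective.ne hij)⟩
  · rw [← Equiv.prod_comp σ.symm m]
    rfl

/-- The reciprocal of the product of the terms of `progression Q` with indices `t i`. -/
noncomputable def tupleWeight (Q : ℕ) (t : ι → ℕ) : ℝ := ∏ i, (progression Q (t i) : ℝ)⁻¹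

theorem natCast_le_div_mul_tupleWeight {Q : ℕ} (hQ : 0 < Q) {t : ι → ℕ} {x B : ℕ} :
    (x : ℝ) ≤ B / Q * tupleWeight Q t ↔ x * (Q * ∏ i, progression Q (t i)) ≤ B := by
  have hpos : 0 < Q * ∏ i, progression Q (t i) :=
    Nat.mul_pos hQ (prod_pos fun i _ => progression_pos Q (t i))
  have heq : (B : ℝ) / Q * tupleWeight Q t = B / (Q * ∏ i, progression Q (t i) : ℕ) := by
    push_cast
    rw [tupleWeight, prod_inv_distrib, ← div_eq_mul_inv, div_div]
  rw [heq, le_div_iff₀ (by exact_mod_cast hpos)]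
  exact_mod_cast Iff.rfl

section IndexBox

variable [DecidableEq ι]

/-- The tuples of indices `t` with `t i < T` for all `i`. -/
def indexBox (ι : Type*) [Fintype ι] [DecidableEq ι] (T : ℕ) : Finset (ι → ℕ) :=
  Fintype.piFinset fun _ => range T

theorem sum_indexBox_tupleWeight (Q T : ℕ) :
    ∑ t ∈ indexBox ι T, tupleWeight Q t = reciprocalSum Q T ^ Fintype.card ι := by
  simp_rw [tupleWeight, indexBox, ← prod_univ_sum (f := fun _ t => (progression Q t : ℝ)⁻¹)]
  rw [prod_const, card_univ, reciprocalSum]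

theorem sum_filter_indexBox_tupleWeight_le (Q T : ℕ) {g : ℕ} (hg : 0 < g) (D : Finset ι) :
    ∑ t ∈ indexBox ι T with ∀ i ∈ D, g ∣ progression Q (t i), tupleWeight Q t ≤
      reciprocalSum Q T ^ Fintype.card ι * (g : ℝ)⁻¹ ^ #D := by
  have hfilter : {t ∈ indexBox ι T | ∀ i ∈ D, g ∣ progression Q (t i)} =
      Fintype.piFinset fun i => {t ∈ range T | i ∈ D → g ∣ progression Q t} := by
    ext t
    simp only [indexBox, mem_filter, Fintype.mem_piFinset, forall_and]
  have hprod : reciprocalSum Q T ^ Fintype.card ι * (g : ℝ)⁻¹ ^ #D =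
      ∏ i, reciprocalSum Q T * if i ∈ D then (g : ℝ)⁻¹ else 1 := by
    rw [prod_mul_distrib, prod_const, card_univ, prod_ite_mem, univ_inter, prod_const]
  simp_rw [hfilter, tupleWeight, ← prod_univ_sum (f := fun _ t => (progression Q t : ℝ)⁻¹)]
  rw [hprod]
  refine prod_le_prod (fun i _ => sum_nonneg fun _ _ => by positivity) fun i _ => ?_
  by_cases hi : i ∈ D
  · simpa only [hi, forall_const, if_true] using sum_filter_dvd_inv_progression_le Q T hg
  · simp [hi, reciprocalSum]

theorem sum_tupleWeight_mul_sharedDivisorSum_le (Q T : ℕ) {z Y a : ℕ} (hz : 0 < z) (hzY : z ≤ Y)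
    {D : Finset ι} (hD : #D + a = 2) :
    ∑ t ∈ indexBox ι T, tupleWeight Q t * sharedDivisorSum z Y a D (progression Q ∘ t) ≤
      reciprocalSum Q T ^ Fintype.card ι * (z : ℝ)⁻¹ := by
  have hS := reciprocalSum_nonneg Q T
  have hsq : ∑ g ∈ Ioc z Y, (g : ℝ)⁻¹ ^ 2 ≤ (z : ℝ)⁻¹ := by
    have hle := sum_Ioc_inv_sq_le_sub (α := ℝ) hz.ne' hzY
    simp_rw [inv_pow]
    exact hle.trans (sub_le_self _ (by positivity))
  calc ∑ t ∈ indexBox ι T, tupleWeight Q t * sharedDivisorSum z Y a D (progression Q ∘ t)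
      = ∑ g ∈ Ioc z Y, (∑ t ∈ indexBox ι T with ∀ i ∈ D, g ∣ progression Q (t i),
          tupleWeight Q t) * (g : ℝ)⁻¹ ^ a := by
        simp_rw [sharedDivisorSum, sum_filter, mul_sum, sum_mul, mul_ite, ite_mul, mul_zero,
          zero_mul]
        exact sum_comm
    _ ≤ ∑ g ∈ Ioc z Y, reciprocalSum Q T ^ Fintype.card ι * (g : ℝ)⁻¹ ^ #D * (g : ℝ)⁻¹ ^ a := by
        gcongr with g hg
        exact sum_filter_indexBox_tupleWeight_le Q T (hz.trans (mem_Ioc.mp hg).1) D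
    _ = reciprocalSum Q T ^ Fintype.card ι * ∑ g ∈ Ioc z Y, (g : ℝ)⁻¹ ^ 2 := by
        simp_rw [mul_assoc, ← pow_add, hD, mul_sum]
    _ ≤ reciprocalSum Q T ^ Fintype.card ι * (z : ℝ)⁻¹ := by gcongr

/-- An upper bound for the proportion of `u` for which the terms of `m`, extended by the `u`-th
term of the progression, fail to be pairwise coprime because of a common divisor in `(z, Y]`. -/
noncomputable def collisionBound (z Y : ℕ) (m : ι → ℕ) : ℝ :=
  ∑ p ∈ (univ : Finset ι).offDiag, sharedDivisorSum z Y 0 {p.1, p.2} m +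
    2 * ∑ i, sharedDivisorSum z Y 1 {i} m

theorem sum_tupleWeight_mul_collisionBound_le (Q T : ℕ) {z Y : ℕ} (hz : 0 < z) (hzY : z ≤ Y) :
    ∑ t ∈ indexBox ι T, tupleWeight Q t * collisionBound z Y (progression Q ∘ t) ≤
      (Fintype.card ι ^ 2 + 2 * Fintype.card ι) *
        (reciprocalSum Q T ^ Fintype.card ι * (z : ℝ)⁻¹) := by
  set E : ℝ := reciprocalSum Q T ^ Fintype.card ι * (z : ℝ)⁻¹
  have hE0 : 0 ≤ E := mul_nonneg (pow_nonneg (reciprocalSum_nonneg Q T) _) (by positivity)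
  have hpair : ∀ p ∈ (univ : Finset ι).offDiag, ∑ t ∈ indexBox ι T,
      tupleWeight Q t * sharedDivisorSum z Y 0 {p.1, p.2} (progression Q ∘ t) ≤ E := fun p hp =>
    sum_tupleWeight_mul_sharedDivisorSum_le Q T hz hzY
      (by rw [card_pair (mem_offDiag.mp hp).2.2])
  have hsingle : ∀ i ∈ (univ : Finset ι), ∑ t ∈ indexBox ι T,
      tupleWeight Q t * sharedDivisorSum z Y 1 {i} (progression Q ∘ t) ≤ E := fun i _ =>
    sum_tupleWeight_mul_sharedDivisorSum_le Q T hz hzY (by rw [card_singleton])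
  have hoffDiag : (#(univ : Finset ι).offDiag : ℝ) ≤ Fintype.card ι ^ 2 := by
    rw [offDiag_card, card_univ, sq]
    exact_mod_cast Nat.sub_le _ _
  calc ∑ t ∈ indexBox ι T, tupleWeight Q t * collisionBound z Y (progression Q ∘ t)
      = ∑ p ∈ (univ : Finset ι).offDiag, ∑ t ∈ indexBox ι T,
          tupleWeight Q t * sharedDivisorSum z Y 0 {p.1, p.2} (progression Q ∘ t) +
        2 * ∑ i, ∑ t ∈ indexBox ι T,
          tupleWeight Q t * sharedDivisorSum z Y 1 {i} (progression Q ∘ t) := by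
        simp_rw [collisionBound, mul_add, sum_add_distrib, mul_sum, mul_left_comm _ (2 : ℝ)]
        rw [sum_comm, sum_comm (s := indexBox ι T) (t := univ)]
    _ ≤ #(univ : Finset ι).offDiag • E + 2 * (#(univ : Finset ι) • E) := by
        gcongr
        exacts [sum_le_card_nsmul _ _ _ hpair, sum_le_card_nsmul _ _ _ hsingle]
    _ ≤ (Fintype.card ι ^ 2 + 2 * Fintype.card ι) * E := by
        rw [nsmul_eq_mul, nsmul_eq_mul, card_univ, add_mul, mul_assoc]
        gcongr

theorem sharedDivisorSum_pair_le_collisionBound (z Y : ℕ) (m : ι → ℕ) {i j : ι} (hij : i ≠ j) :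
    sharedDivisorSum z Y 0 {i, j} m ≤ collisionBound z Y m := by
  have hpairs := single_le_sum
    (f := fun p : ι × ι => sharedDivisorSum z Y 0 {p.1, p.2} m) (a := (i, j))
    (fun p _ => sharedDivisorSum_nonneg z Y 0 {p.1, p.2} m)
    (mem_offDiag.mpr ⟨mem_univ i, mem_univ j, hij⟩)
  have hsingles := sum_nonneg fun i (_ : i ∈ univ) => sharedDivisorSum_nonneg z Y 1 {i} m
  rw [collisionBound]
  linarith

theorem mul_half_sub_collisionBound_nonpos {z Y : ℕ} {t : ι → ℕ} {w : ℝ} (hw : 0 ≤ w)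
    (ht : ∀ i, progression z.factorial (t i) ≤ Y)
    (hcop : ¬Pairwise (Nat.Coprime on (progression z.factorial ∘ t))) :
    w * (1 / 2 - collisionBound z Y (progression z.factorial ∘ t)) ≤ 0 := by
  simp only [Pairwise, not_forall] at hcop
  obtain ⟨i, j, hij, h⟩ := hcop
  have hone := one_le_sharedDivisorSum (ht i) h
  have hpair := sharedDivisorSum_pair_le_collisionBound z Y (progression z.factorial ∘ t) hij
  exact mul_nonpos_of_nonneg_of_nonpos hw (by linarith)

theorem mul_half_sub_collisionBound_le_card_coprimeExtensions {z Y U : ℕ} {t : ι → ℕ} {w : ℝ}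
    (ht : ∀ i, progression z.factorial (t i) ≤ Y) (hUw : (U : ℝ) ≤ w) (hwU : w / 2 ≤ U)
    (hYw : (Y : ℝ) ≤ w) :
    w * (1 / 2 - collisionBound z Y (progression z.factorial ∘ t)) ≤
      #(coprimeExtensions z.factorial U t) := by
  set Q := z.factorial
  have hw : 0 ≤ w := (Nat.cast_nonneg Y).trans hYw
  by_cases hcop : Pairwise (Nat.Coprime on (progression Q ∘ t))
  swap
  · exact (mul_half_sub_collisionBound_nonpos hw ht hcop).trans (Nat.cast_nonneg _)
  have hcover : range U ⊆ coprimeExtensions Q U t ∪ univ.biUnion fun i =>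
      {u ∈ range U | ¬(progression Q (t i)).Coprime (progression Q u)} := by
    intro u hu
    by_cases h : ∀ i, (progression Q (t i)).Coprime (progression Q u)
    · exact mem_union_left _ (mem_coprimeExtensions.mpr
        ⟨mem_range.mp hu, pairwise_coprime_option_elim hcop h⟩)
    · obtain ⟨i, hi⟩ := not_forall.mp h
      exact mem_union_right _ (mem_biUnion.mpr ⟨i, mem_univ i, mem_filter.mpr ⟨hu, hi⟩⟩)
  have hcard : (U : ℝ) ≤ #(coprimeExtensions Q U t) +
      ∑ i, (#{u ∈ range U | ¬(progression Q (t i)).Coprime (progression Q u)} : ℝ) := by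
    have hle := (card_le_card hcover).trans
      ((card_union_le _ _).trans (Nat.add_le_add_left card_biUnion_le _))
    rw [card_range] at hle
    exact_mod_cast hle
  have hbad := sum_le_sum fun i (_ : i ∈ univ) => card_not_coprime_le (ht i) hUw hYw
  have hpairs := sum_nonneg fun p (_ : p ∈ (univ : Finset ι).offDiag) =>
    sharedDivisorSum_nonneg z Y 0 {p.1, p.2} (progression Q ∘ t)
  rw [← mul_sum] at hbad
  rw [collisionBound]
  linarith [mul_nonneg hw hpairs]

theorem reciprocalSum_pow_le_sum_half_sub_collisionBound (Q T : ℕ) {z Y : ℕ}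
    (hz : 4 * (Fintype.card ι ^ 2 + 2 * Fintype.card ι) < z) (hzY : z ≤ Y) :
    reciprocalSum Q T ^ Fintype.card ι / 4 ≤
      ∑ t ∈ indexBox ι T, tupleWeight Q t * (1 / 2 - collisionBound z Y (progression Q ∘ t)) := by
  have hz0 : (0 : ℝ) < z := by exact_mod_cast (Nat.zero_le _).trans_lt hz
  have hbound := sum_tupleWeight_mul_collisionBound_le (ι := ι) Q T (Nat.zero_lt_of_lt hz) hzY
  have hquarter : ((Fintype.card ι : ℝ) ^ 2 + 2 * Fintype.card ι) * (z : ℝ)⁻¹ ≤ 1 / 4 := by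
    rw [← div_eq_mul_inv, div_le_div_iff₀ hz0 four_pos]
    have hz' : (4 * (Fintype.card ι ^ 2 + 2 * Fintype.card ι) : ℝ) ≤ z := by exact_mod_cast hz.le
    linarith
  have hS := pow_nonneg (reciprocalSum_nonneg Q T) (Fintype.card ι)
  simp_rw [mul_sub, sum_sub_distrib, ← sum_mul, sum_indexBox_tupleWeight]
  linarith [mul_le_mul_of_nonneg_left hquarter hS]

theorem sum_card_coprimeExtensions_le {Q : ℕ} (hQ : 0 < Q) (T B : ℕ) :
    ∑ t ∈ indexBox ι T, #(coprimeExtensions Q ⌊(B : ℝ) / Q * tupleWeight Q t⌋₊ t) ≤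
      #(coprimeTuples (Option ι) B) := by
  rw [← card_sigma]
  refine card_le_card_of_injOn
    (fun a o => o.elim (progression Q a.2) (progression Q ∘ a.1)) ?_ ?_
  · rintro ⟨t, u⟩ hmem
    obtain ⟨huU, hcop⟩ := mem_coprimeExtensions.mp (mem_sigma.mp hmem).2
    refine mem_coprimeTuples.mpr ⟨?_, hcop, ?_⟩
    · rintro (_ | i) <;> exact progression_pos _ _
    · have hu := (natCast_le_div_mul_tupleWeight hQ).mp
        ((Nat.le_floor_iff' u.succ_ne_zero).mp huU)
      rw [Fintype.prod_option]
      calc progression Q u * ∏ i, progression Q (t i)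
          ≤ Q * (u + 1) * ∏ i, progression Q (t i) := by
            gcongr
            exact progression_le_mul hQ u.lt_succ_self
        _ = (u + 1) * (Q * ∏ i, progression Q (t i)) := by ring
        _ ≤ B := hu
  · rintro ⟨t, u⟩ - ⟨t', u'⟩ - h
    have hu : u = u' := progression_injective hQ (congrFun h none)
    have ht : t = t' := funext fun i => progression_injective hQ (congrFun h (some i))
    rw [hu, ht]

end IndexBox

theorem mul_reciprocalSum_pow_le_card_coprimeTuples {z T B : ℕ}
    (hz : 4 * (Fintype.card ι ^ 2 + 2 * Fintype.card ι) + 1 < z) (hT : 0 < T)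
    (hB : z.factorial * (z.factorial * T) ^ (Fintype.card ι + 1) ≤ B) :
    (B : ℝ) / z.factorial / 4 * reciprocalSum z.factorial T ^ Fintype.card ι ≤
      #(coprimeTuples (Option ι) B) := by
  classical
  set Q := z.factorial
  have hQ : 0 < Q := z.factorial_pos
  have hzY : z ≤ Q * T := z.self_le_factorial.trans (Nat.le_mul_of_pos_right Q hT)
  have hbox : ∀ t ∈ indexBox ι T, ∀ i, progression Q (t i) ≤ Q * T := fun t ht i =>
    progression_le_mul hQ (mem_range.mp (Fintype.mem_piFinset.mp ht i))
  have hlarge : ∀ t ∈ indexBox ι T, ((Q * T : ℕ) : ℝ) ≤ B / Q * tupleWeight Q t := by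
    refine fun t ht => (natCast_le_div_mul_tupleWeight hQ).mpr (le_trans ?_ hB)
    calc Q * T * (Q * ∏ i, progression Q (t i)) ≤ Q * T * (Q * (Q * T) ^ Fintype.card ι) := by
          gcongr
          exact prod_le_pow_card univ _ _ fun i _ => hbox t ht i
      _ = Q * (Q * T) ^ (Fintype.card ι + 1) := by ring
  calc (B : ℝ) / Q / 4 * reciprocalSum Q T ^ Fintype.card ι
      = B / Q * (reciprocalSum Q T ^ Fintype.card ι / 4) := by ring
    _ ≤ B / Q * ∑ t ∈ indexBox ι T, tupleWeight Q t *
          (1 / 2 - collisionBound z (Q * T) (progression Q ∘ t)) := by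
        gcongr
        exact reciprocalSum_pow_le_sum_half_sub_collisionBound Q T (by omega) hzY
    _ ≤ ∑ t ∈ indexBox ι T, (#(coprimeExtensions Q ⌊(B : ℝ) / Q * tupleWeight Q t⌋₊ t) : ℝ) := by
        rw [mul_sum]
        refine sum_le_sum fun t ht => ?_
        have hY2 : (2 : ℝ) ≤ (Q * T : ℕ) := by exact_mod_cast (by omega : 2 ≤ z).trans hzY
        have hfloor := Nat.lt_floor_add_one ((B : ℝ) / Q * tupleWeight Q t)
        rw [← mul_assoc]
        exact mul_half_sub_collisionBound_le_card_coprimeExtensions (hbox t ht)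
          (Nat.floor_le (by linarith [hlarge t ht])) (by linarith [hlarge t ht]) (hlarge t ht)
    _ ≤ #(coprimeTuples (Option ι) B) := by exact_mod_cast sum_card_coprimeExtensions_le hQ T B

-- The coordinates indexed by `ι` stay below about `B ^ (1 / (2 * card ι + 2))`, which leaves the
-- last coordinate a range longer than any of their common divisors.
theorem exists_mul_log_pow_le_card_coprimeTuples_option : ∃ c : ℝ, 0 < c ∧
    ∀ᶠ B : ℕ in Filter.atTop,
      c * (B * Real.log B ^ Fintype.card ι) ≤ #(coprimeTuples (Option ι) B) := by
  set k := Fintype.card ι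
  set z := 4 * (k ^ 2 + 2 * k) + 2
  set Q := z.factorial
  set M := 2 * k + 2
  have hQ : 0 < Q := z.factorial_pos
  have : (0 : ℝ) < Q := by exact_mod_cast hQ
  have hM : M ≠ 0 := Nat.succ_ne_zero _
  refine ⟨1 / Q / 4 * (M * Q : ℝ)⁻¹ ^ k, by positivity, ?_⟩
  filter_upwards [Filter.eventually_ge_atTop ((Q ^ (k + 2)) ^ M)] with B hB
  set T := Nat.nthRoot M B
  have hTB : T ^ M ≤ B := Nat.pow_nthRoot_le (.inl hM)
  have hBT : B < (T + 1) ^ M := Nat.lt_pow_nthRoot_add_one hM B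
  have hQT : Q ^ (k + 2) ≤ T := Nat.lt_succ_iff.mp (lt_of_pow_lt_pow_left₀ M (Nat.zero_le _)
    (hB.trans_lt hBT))
  have hT : 0 < T := (Nat.pow_pos hQ).trans_le hQT
  have hB0 : 0 < B := (Nat.pow_pos hT).trans_le hTB
  have hroom : Q * (Q * T) ^ (k + 1) ≤ B :=
    calc Q * (Q * T) ^ (k + 1) = Q ^ (k + 2) * T ^ (k + 1) := by ring
      _ ≤ T * T ^ (k + 1) := by gcongr
      _ = T ^ (k + 2) := by ring
      _ ≤ T ^ M := Nat.pow_le_pow_right hT (by omega)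
      _ ≤ B := hTB
  have hlog := inv_mul_log_le_reciprocalSum hQ hM hB0 hBT.le
  calc 1 / Q / 4 * (M * Q : ℝ)⁻¹ ^ k * ((B : ℝ) * Real.log B ^ k)
      = B / Q / 4 * ((M * Q : ℝ)⁻¹ * Real.log B) ^ k := by rw [mul_pow]; ring
    _ ≤ B / Q / 4 * reciprocalSum Q T ^ k := by
        have := Real.log_nonneg (Nat.one_le_cast.mpr hB0)
        gcongr
    _ ≤ #(coprimeTuples (Option ι) B) :=
        mul_reciprocalSum_pow_le_card_coprimeTuples (Nat.lt_succ_self _) hT hroom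

theorem exists_mul_log_pow_le_card_coprimeTuples (ι : Type*) [Fintype ι] [Nonempty ι] :
    ∃ c : ℝ, 0 < c ∧ ∀ᶠ B : ℕ in Filter.atTop,
      c * (B * Real.log B ^ (Fintype.card ι - 1)) ≤ #(coprimeTuples ι B) := by
  obtain ⟨c, hc, hbound⟩ :=
    exists_mul_log_pow_le_card_coprimeTuples_option (ι := Fin (Fintype.card ι - 1))
  have hcard : Fintype.card (Option (Fin (Fintype.card ι - 1))) = Fintype.card ι := by
    rw [Fintype.card_option, Fintype.card_fin, Nat.sub_add_cancel Fintype.card_pos]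
  refine ⟨c, hc, hbound.mono fun B hB => ?_⟩
  rwa [card_coprimeTuples_congr (Fintype.equivOfCardEq hcard), Fintype.card_fin] at hB

end CoprimeTuples

section CongruenceSubrings

/-- The unordered pairs of distinct elements of a linear order, each written in increasing order.
They index the congruences `x j ≡ x i` imposed on a vector `x`. -/
abbrev OrderedPair (ι : Type*) [LT ι] : Type _ := {e : ι × ι // e.1 < e.2}

theorem card_orderedPair_fin (n : ℕ) : Fintype.card (OrderedPair (Fin n)) = n * (n - 1) / 2 := by
  rw [Fintype.card_subtype, card_filter, Fintype.sum_prod_type_right]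
  simp_rw [← card_filter, filter_gt_eq_Iio, Fin.card_Iio]
  rw [Fin.sum_univ_eq_sum_range (fun i => i), sum_range_id]

theorem nonempty_orderedPair_fin {n : ℕ} (hn : 2 ≤ n) : Nonempty (OrderedPair (Fin n)) :=
  ⟨⟨(⟨0, by omega⟩, ⟨1, by omega⟩), Fin.mk_lt_mk.mpr one_pos⟩⟩

variable {ι : Type*} [LinearOrder ι]

/-- The additive map `x ↦ (x j - x i mod m (i, j))_{i < j}`. -/
def differenceHom (m : OrderedPair ι → ℕ) : (ι → ℤ) →+ ((e : OrderedPair ι) → ZMod (m e)) :=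
  AddMonoidHom.mk' (fun x e => (x e.1.2 - x e.1.1 : ℤ)) fun x y => funext fun e => by
    simp only [Pi.add_apply, Int.cast_sub, Int.cast_add]
    ring

/-- The ring of the `x` with `x j ≡ x i` modulo `m (i, j)` for all `i < j`. -/
def congruenceSubring (m : OrderedPair ι → ℕ) : Subring (ι → ℤ) :=
  ⨅ e : OrderedPair ι, ((Int.castRingHom (ZMod (m e))).comp (Pi.evalRingHom _ e.1.1)).eqLocus
    ((Int.castRingHom (ZMod (m e))).comp (Pi.evalRingHom _ e.1.2))

theorem mem_congruenceSubring {m : OrderedPair ι → ℕ} {x : ι → ℤ} :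
    x ∈ congruenceSubring m ↔ ∀ e : OrderedPair ι, (m e : ℤ) ∣ x e.1.2 - x e.1.1 := by
  rw [congruenceSubring, Subring.mem_iInf]
  exact forall_congr' fun e => ZMod.intCast_eq_intCast_iff_dvd_sub _ _ _

theorem toAddSubgroup_congruenceSubring (m : OrderedPair ι → ℕ) :
    (congruenceSubring m).toAddSubgroup = (differenceHom m).ker := by
  ext x
  rw [AddMonoidHom.mem_ker, funext_iff]
  exact mem_congruenceSubring.trans
    (forall_congr' fun e => (ZMod.intCast_zmod_eq_zero_iff_dvd _ _).symm)

-- By the Chinese remainder theorem `x j` may be chosen to be `c (i, j)` modulo `m (i, j)` for all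
-- `i < j` and `0` modulo all the other moduli.
theorem differenceHom_surjective [Finite ι] {m : OrderedPair ι → ℕ}
    (hm : Pairwise (Nat.Coprime on m)) : Surjective (differenceHom m) := by
  have := Fintype.ofFinite ι
  intro c
  have hcrt (j : ι) : ∃ a : ℤ, ∀ e, (a : ZMod (m e)) = if e.1.2 = j then c e else 0 := by
    obtain ⟨a, ha⟩ := ZMod.intCast_surjective
      ((ZMod.prodEquivPi m hm).symm fun e => if e.1.2 = j then c e else 0)
    refine ⟨a, fun e => ?_⟩
    have h := congrFun ((ZMod.prodEquivPi m hm).symm_apply_eq.mp ha.symm) e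
    rw [map_intCast] at h
    exact h.symm
  choose x hx using hcrt
  refine ⟨x, funext fun e => ?_⟩
  change ((x e.1.2 - x e.1.1 : ℤ) : ZMod (m e)) = c e
  rw [Int.cast_sub, hx, hx, if_pos rfl, if_neg e.2.ne', sub_zero]

theorem index_congruenceSubring [Fintype ι] {m : OrderedPair ι → ℕ}
    (hm : Pairwise (Nat.Coprime on m)) :
    (congruenceSubring m).toAddSubgroup.index = ∏ e, m e := by
  rw [toAddSubgroup_congruenceSubring, AddSubgroup.index_ker,
    (AddMonoidHom.range_eq_top (f := differenceHom m)).mpr (differenceHom_surjective hm),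
    AddSubgroup.card_top, Nat.card_pi]
  simp_rw [Nat.card_zmod]

section IncidentPairs

variable [Fintype ι]

/-- The pairs with `i` as one of their two members. -/
def incidentPairs (i : ι) : Finset (OrderedPair ι) := {e | e.1.1 = i ∨ e.1.2 = i}

theorem mem_incidentPairs {i : ι} {e : OrderedPair ι} :
    e ∈ incidentPairs i ↔ e.1.1 = i ∨ e.1.2 = i := by
  simp [incidentPairs]

theorem single_mem_congruenceSubring (m : OrderedPair ι → ℕ) (i : ι) :
    Pi.single i ((∏ e ∈ incidentPairs i, m e : ℕ) : ℤ) ∈ congruenceSubring m := by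
  refine mem_congruenceSubring.mpr fun e => ?_
  by_cases he : e ∈ incidentPairs i
  · have hdvd : (m e : ℤ) ∣ (∏ e ∈ incidentPairs i, m e : ℕ) :=
      Int.natCast_dvd_natCast.mpr (dvd_prod_of_mem m he)
    have hsingle (l : ι) : (m e : ℤ) ∣
        (Pi.single i ((∏ e ∈ incidentPairs i, m e : ℕ) : ℤ) : ι → ℤ) l := by
      rw [Pi.single_apply]
      split_ifs
      exacts [hdvd, dvd_zero _]
    exact dvd_sub (hsingle _) (hsingle _)
  · rw [mem_incidentPairs, not_or] at he
    rw [Pi.single_eq_of_ne he.2, Pi.single_eq_of_ne he.1, sub_zero]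
    exact dvd_zero _

theorem dvd_prod_incidentPairs {m m' : OrderedPair ι → ℕ}
    (hle : congruenceSubring m ≤ congruenceSubring m') {e : OrderedPair ι} {i : ι}
    (hi : e ∈ incidentPairs i) : m' e ∣ ∏ d ∈ incidentPairs i, m d := by
  have hdvd := mem_congruenceSubring.mp (hle (single_mem_congruenceSubring m i)) e
  rw [← Int.natCast_dvd_natCast]
  rcases mem_incidentPairs.mp hi with rfl | rfl
  · rwa [Pi.single_eq_same, Pi.single_eq_of_ne e.2.ne', zero_sub, dvd_neg] at hdvd
  · rwa [Pi.single_eq_same, Pi.single_eq_of_ne e.2.ne, sub_zero] at hdvd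

theorem incidentPairs_inter (e : OrderedPair ι) :
    incidentPairs e.1.1 ∩ incidentPairs e.1.2 = {e} := by
  ext d
  rw [mem_inter, mem_incidentPairs, mem_incidentPairs, mem_singleton, Subtype.ext_iff,
    Prod.ext_iff]
  have := d.2
  have := e.2
  grind

end IncidentPairs

theorem gcd_prod_prod_of_pairwise_coprime {κ : Type*} [DecidableEq κ] {m : κ → ℕ}
    (hm : Pairwise (Nat.Coprime on m)) (s t : Finset κ) :
    (∏ e ∈ s, m e).gcd (∏ e ∈ t, m e) = ∏ e ∈ s ∩ t, m e := by
  have hcop : (∏ e ∈ s \ t, m e).Coprime (∏ e ∈ t \ s, m e) :=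
    Nat.Coprime.prod_left fun d hd => Nat.Coprime.prod_right fun e he =>
      hm (ne_of_mem_of_not_mem (mem_sdiff.mp hd).1 (mem_sdiff.mp he).2)
  rw [← prod_inter_mul_prod_sdiff s t, ← prod_inter_mul_prod_sdiff t s, inter_comm t s,
    Nat.gcd_mul_left, hcop.gcd_eq_one, mul_one]

theorem dvd_of_congruenceSubring_le [Finite ι] {m m' : OrderedPair ι → ℕ}
    (hm : Pairwise (Nat.Coprime on m)) (hle : congruenceSubring m ≤ congruenceSubring m')
    (e : OrderedPair ι) : m' e ∣ m e := by
  have := Fintype.ofFinite ι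
  have hgcd := gcd_prod_prod_of_pairwise_coprime hm (incidentPairs e.1.1) (incidentPairs e.1.2)
  rw [incidentPairs_inter, prod_singleton] at hgcd
  rw [← hgcd]
  exact Nat.dvd_gcd (dvd_prod_incidentPairs hle (mem_incidentPairs.mpr (.inl rfl)))
    (dvd_prod_incidentPairs hle (mem_incidentPairs.mpr (.inr rfl)))

theorem injOn_congruenceSubring [Finite ι] :
    Set.InjOn congruenceSubring {m : OrderedPair ι → ℕ | Pairwise (Nat.Coprime on m)} :=
  fun _ hm _ hm' h => funext fun e =>
    Nat.dvd_antisymm (dvd_of_congruenceSubring_le hm' h.ge e)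
      (dvd_of_congruenceSubring_le hm h.le e)

theorem card_coprimeTuples_prod_eq_le_subringCount (n B : ℕ) {r : ℕ} (hr : 0 < r) :
    #{m ∈ coprimeTuples (OrderedPair (Fin n)) B | ∏ e, m e = r} ≤ subringCount n r := by
  have := finite_subrings_of_index (ι := Fin n) hr
  have hcop (m : {m ∈ coprimeTuples (OrderedPair (Fin n)) B | ∏ e, m e = r}) :
      Pairwise (Nat.Coprime on m.1) := (mem_coprimeTuples.mp (mem_filter.mp m.2).1).2.1
  rw [subringCount, ← Fintype.card_coe, ← Nat.card_eq_fintype_card]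
  refine Nat.card_le_card_of_injective (fun m => ⟨congruenceSubring m.1, ?_⟩) fun m m' h => ?_
  · rw [index_congruenceSubring (hcop m), (mem_filter.mp m.2).2]
  · exact Subtype.ext (injOn_congruenceSubring (hcop m) (hcop m') (congrArg Subtype.val h))

theorem card_coprimeTuples_le_subringCountUpTo (n B : ℕ) :
    #(coprimeTuples (OrderedPair (Fin n)) B) ≤ subringCountUpTo n B := by
  have hmaps : ∀ m ∈ coprimeTuples (OrderedPair (Fin n)) B, ∏ e, m e ∈ Icc 1 B := fun m hm =>
    have ⟨hpos, _, hprod⟩ := mem_coprimeTuples.mp hm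
    mem_Icc.mpr ⟨prod_pos fun e _ => hpos e, hprod⟩
  rw [card_eq_sum_card_fiberwise hmaps]
  exact sum_le_sum fun r hr => card_coprimeTuples_prod_eq_le_subringCount n B (mem_Icc.mp hr).1

theorem exists_mul_log_pow_le_subringCountUpTo {n : ℕ} (hn : 2 ≤ n) :
    ∃ c : ℝ, 0 < c ∧ ∀ᶠ B : ℕ in Filter.atTop,
      c * ((B : ℝ) * Real.log B ^ (n * (n - 1) / 2 - 1)) ≤ subringCountUpTo n B := by
  have := nonempty_orderedPair_fin hn
  obtain ⟨c, hc, hbound⟩ := exists_mul_log_pow_le_card_coprimeTuples (OrderedPair (Fin n))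
  rw [card_orderedPair_fin] at hbound
  exact ⟨c, hc, hbound.mono fun B hB =>
    hB.trans (Nat.cast_le.mpr (card_coprimeTuples_le_subringCountUpTo n B))⟩

end CongruenceSubrings

theorem subring_asymptotics_large_n_general (n : ℕ) (hn : 5 ≤ n) (ε : ℝ) (hε : 0 < ε) :
    ∃ c Cε : ℝ, 0 < c ∧ 0 < Cε ∧
      ∀ᶠ B : ℕ in Filter.atTop,
        c * ((B : ℝ) * Real.log B ^ (n * (n - 1) / 2 - 1)) ≤ (subringCountUpTo n B : ℝ) ∧
        (subringCountUpTo n B : ℝ) ≤ Cε * (B : ℝ) ^ ((n : ℝ) / 2 - 7 / 6 + ε) := by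
  obtain ⟨c, hc, hlower⟩ := exists_mul_log_pow_le_subringCountUpTo (n := n) (by omega)
  obtain ⟨C, hC, hupper⟩ := exists_subringCountUpTo_le hn hε
  exact ⟨c, C, hc, hC, hlower.mono fun B hB => ⟨hB, hupper B⟩⟩

theorem subring_asymptotics_large_n (n : ℕ) (hn : 6 ≤ n) (ε : ℝ) (hε : 0 < ε) :
    ∃ c Cε : ℝ, 0 < c ∧ 0 < Cε ∧
      ∀ᶠ B : ℕ in Filter.atTop,
        c * ((B : ℝ) * Real.log B ^ (n * (n - 1) / 2 - 1)) ≤ (subringCountUpTo n B : ℝ) ∧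
        (subringCountUpTo n B : ℝ) ≤ Cε * (B : ℝ) ^ ((n : ℝ) / 2 - 7 / 6 + ε) :=
  subring_asymptotics_large_n_general n (by omega) ε hε
end

section
/- For all natural numbers n ≥ 1, k ≥ 0 and r ≥ 1: φ_{n+k,k}(r) = S(n+k+1, n+1) · φ_n(r), where S(u,v) denotes the Stirling number of the second kind, i.e., the number of partitions of a set with u elements into v nonempty subsets. -/
/-- A sublattice of `ℤ^n` is multiplicative if it is closed under componentwise
multiplication. -/
def IsMulClosed {n : ℕ} (L : Submodule ℤ (Fin n → ℤ)) : Prop :=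
  ∀ u ∈ L, ∀ v ∈ L, u * v ∈ L

/-- `phi n r` is the number of multiplicative sublattices of `ℤ^n` of full rank `n`
and index `r`. -/
noncomputable def phi (n r : ℕ) : ℕ :=
  Nat.card {L : Submodule ℤ (Fin n → ℤ) //
    IsMulClosed L ∧ Module.finrank ℤ L = n ∧ L.toAddSubgroup.index = r}

/-- `phiCorank m k r` is the number of multiplicative sublattices of `ℤ^m` of co-rank `k`
whose quotient has torsion subgroup of cardinality `r`. -/
noncomputable def phiCorank (m k r : ℕ) : ℕ :=
  Nat.card {L : Submodule ℤ (Fin m → ℤ) //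
    IsMulClosed L ∧ Module.finrank ℤ L = m - k ∧
    Nat.card (Submodule.torsion ℤ ((Fin m → ℤ) ⧸ L)) = r}

/-- The Stirling number of the second kind: the number of partitions of a set with `u`
elements into `v` nonempty parts. -/
noncomputable def stirlingSecond (u v : ℕ) : ℕ :=
  Nat.card {S : Finset (Finset (Fin u)) //
    S.card = v ∧ (∀ t ∈ S, t.Nonempty) ∧ ∀ a, ∃! t, t ∈ S ∧ a ∈ t}

/-!
Adjoin to the coordinates of `R ^ ι` the zero functional, so that `R ^ ι` has the evaluations
indexed by `Option ι`. A multiplicative sublattice `A` induces an equivalence relation on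
`Option ι`: two indices are equivalent when the corresponding evaluations agree on `A`. If there
are `n + 1` classes, then `A` sits inside the copy of `R ^ n` consisting of the vectors that are
constant on the classes and vanish on the class of `none`. There `A` separates the evaluations, and
multiplying differences `v j - v` shows that it contains a nonzero multiple of each basis vector,
so it has rank `n`. The copy of `R ^ n` is saturated, so the torsion of `R ^ ι ⧸ A` is the whole
quotient of `R ^ n` by `A`. Hence each equivalence relation with `n + 1` classes arises from exactly
`phi n r` of the sublattices counted.
-/

section Torsion

variable {R V W : Type*} [CommRing R] [AddCommGroup V] [Module R V] [AddCommGroup W] [Module R W]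

theorem range_mapQ_map_eq_torsion {φ : V →ₗ[R] W}
    (hsat : ∀ a ∈ nonZeroDivisors R, ∀ w : W, a • w ∈ φ.range → w ∈ φ.range)
    {L : Submodule R V} (hL : Module.IsTorsion R (V ⧸ L)) :
    (L.mapQ (L.map φ) φ (Submodule.le_comap_map φ L)).range =
      Submodule.torsion R (W ⧸ L.map φ) := by
  apply le_antisymm
  · rintro _ ⟨q, rfl⟩
    obtain ⟨a, ha⟩ := @hL q
    exact (Submodule.mem_torsion_iff _).2 ⟨a, by
      rw [Submonoid.smul_def] at ha ⊢
      rw [← map_smul, ha, map_zero]⟩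
  · intro q hq
    obtain ⟨w, rfl⟩ := Submodule.Quotient.mk_surjective _ q
    obtain ⟨a, ha⟩ := (Submodule.mem_torsion_iff _).1 hq
    rw [Submonoid.smul_def, ← Submodule.Quotient.mk_smul, Submodule.Quotient.mk_eq_zero] at ha
    obtain ⟨v, rfl⟩ := hsat a a.2 w (LinearMap.map_le_range ha)
    exact ⟨Submodule.Quotient.mk v, Submodule.mapQ_apply _ _ _ _⟩

theorem card_torsion_quotient_map {φ : V →ₗ[R] W} (hφ : Function.Injective φ)
    (hsat : ∀ a ∈ nonZeroDivisors R, ∀ w : W, a • w ∈ φ.range → w ∈ φ.range)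
    {L : Submodule R V} (hL : Module.IsTorsion R (V ⧸ L)) :
    Nat.card (Submodule.torsion R (W ⧸ L.map φ)) = Nat.card (V ⧸ L) := by
  have hinj : Function.Injective (L.mapQ (L.map φ) φ (Submodule.le_comap_map φ L)) := by
    rw [← LinearMap.ker_eq_bot, Submodule.ker_mapQ, Submodule.comap_map_eq_of_injective hφ,
      Submodule.mkQ_map_self]
  rw [← range_mapQ_map_eq_torsion hsat hL]
  exact (Nat.card_congr (LinearEquiv.ofInjective _ hinj).toEquiv).symm

theorem isTorsion_quotient_iff_finrank_eq [IsDomain R] [Module.Finite R V] (L : Submodule R V) :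
    Module.IsTorsion R (V ⧸ L) ↔ Module.finrank R L = Module.finrank R V := by
  rw [← Module.finrank_eq_zero_iff_isTorsion, ← L.finrank_quotient_add_finrank]
  omega

end Torsion

section Evaluation

variable {R ι κ : Type*} [CommRing R]

variable (R) in
/-- Evaluation of a vector at a coordinate, with `none` standing for the zero functional. -/
def evalOption (a : Option ι) : (ι → R) →ₙₐ[R] R where
  toFun v := a.elim 0 v
  map_smul' c v := by cases a <;> simp
  map_zero' := by cases a <;> rfl
  map_add' v w := by cases a <;> simp
  map_mul' v w := by cases a <;> simp

@[simp]
theorem evalOption_none (v : ι → R) : evalOption R none v = 0 := rfl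

@[simp]
theorem evalOption_some (i : ι) (v : ι → R) : evalOption R (some i) v = v i := rfl

theorem evalOption_injective [Nontrivial R] :
    Function.Injective (evalOption R : Option ι → (ι → R) →ₙₐ[R] R) := by
  classical
  intro a b hab
  have eval_eq (v : ι → R) : evalOption R a v = evalOption R b v := DFunLike.congr_fun hab v
  match a, b with
  | none, none => rfl
  | none, some j => simpa using eval_eq 1
  | some i, none => simpa using eval_eq 1
  | some i, some j =>
    have hji : j = i := by simpa [Pi.single_apply] using eval_eq (Pi.single i 1)
    rw [hji]

variable (R) in
/-- The homomorphism `R ^ κ → R ^ ι` whose `i`-th coordinate is the `f i`-th coordinate of its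
argument, or `0` where `f i = none`. -/
def pullback (f : ι → Option κ) : (κ → R) →ₙₐ[R] (ι → R) where
  toFun w i := evalOption R (f i) w
  map_smul' c w := funext fun i => map_smul (evalOption R (f i)) c w
  map_zero' := funext fun i => map_zero (evalOption R (f i))
  map_add' v w := funext fun i => map_add (evalOption R (f i)) v w
  map_mul' v w := funext fun i => map_mul (evalOption R (f i)) v w

theorem evalOption_pullback (f : ι → Option κ) (w : κ → R) (a : Option ι) :
    evalOption R a (pullback R f w) = evalOption R (a.bind f) w := by
  cases a <;> rfl

variable {f : ι → Option κ}

theorem pullback_injective (hf : Function.Surjective (Option.bind · f)) :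
    Function.Injective (pullback R f) := by
  intro v w hvw
  ext k
  obtain ⟨a, ha⟩ := hf (some k)
  simpa only [evalOption_pullback, ha, evalOption_some] using congrArg (evalOption R a) hvw

theorem mem_range_pullback_iff (hf : Function.Surjective (Option.bind · f)) (v : ι → R) :
    v ∈ Set.range (pullback R f) ↔
      ∀ a b : Option ι, a.bind f = b.bind f → evalOption R a v = evalOption R b v := by
  constructor
  · rintro ⟨w, rfl⟩ a b hab
    rw [evalOption_pullback, evalOption_pullback, hab]
  · intro hv
    choose g hg using hf
    refine ⟨fun k => evalOption R (g (some k)) v, funext fun i => ?_⟩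
    change evalOption R (f i) _ = evalOption R (some i) v
    cases hfi : f i with
    | none => exact hv none (some i) hfi.symm
    | some k => exact hv _ (some i) ((hg (some k)).trans hfi.symm)

theorem mem_range_pullback_of_smul_mem (hf : Function.Surjective (Option.bind · f))
    {c : R} (hc : c ∈ nonZeroDivisors R) {v : ι → R}
    (hcv : c • v ∈ Set.range (pullback R f)) : v ∈ Set.range (pullback R f) := by
  rw [mem_range_pullback_iff hf] at hcv ⊢
  intro a b hab
  have eval_smul := hcv a b hab
  rw [map_smul, map_smul, smul_eq_mul, smul_eq_mul] at eval_smul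
  exact (mul_cancel_left_mem_nonZeroDivisors hc).1 eval_smul

end Evaluation

section CoordSetoid

variable {R ι κ : Type*} [CommRing R]

/-- The equivalence relation on `Option ι` identifying two indices when the corresponding
evaluations agree on `A`; the class of `none` consists of the coordinates vanishing on `A`. -/
def coordSetoid (A : NonUnitalSubalgebra R (ι → R)) : Setoid (Option ι) :=
  Setoid.ker fun a (v : A) => evalOption R a (v : ι → R)

theorem coordSetoid_iff {A : NonUnitalSubalgebra R (ι → R)} {a b : Option ι} :
    coordSetoid A a b ↔ ∀ v ∈ A, evalOption R a v = evalOption R b v :=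
  Setoid.ker_def.trans (funext_iff.trans Subtype.forall)

theorem coordSetoid_map_pullback (f : ι → Option κ) (B : NonUnitalSubalgebra R (κ → R)) :
    coordSetoid (B.map (pullback R f)) = (coordSetoid B).comap (Option.bind · f) := by
  ext a b
  simp [Setoid.comap_rel, coordSetoid_iff, evalOption_pullback]

theorem coordSetoid_map_pullback_eq_ker_iff {f : ι → Option κ}
    (hf : Function.Surjective (Option.bind · f)) {B : NonUnitalSubalgebra R (κ → R)} :
    coordSetoid (B.map (pullback R f)) = Setoid.ker (Option.bind · f) ↔ coordSetoid B = ⊥ := by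
  rw [coordSetoid_map_pullback]
  exact (Setoid.comap_injective _ hf).eq_iff' rfl

theorem exists_map_pullback_eq {f : ι → Option κ} (hf : Function.Surjective (Option.bind · f))
    {A : NonUnitalSubalgebra R (ι → R)} (hA : coordSetoid A = Setoid.ker (Option.bind · f)) :
    ∃ B : NonUnitalSubalgebra R (κ → R), B.map (pullback R f) = A := by
  refine ⟨A.comap (pullback R f), SetLike.coe_injective ?_⟩
  refine Set.image_preimage_eq_of_subset fun v hv => (mem_range_pullback_iff hf v).2 ?_
  intro a b hab
  exact coordSetoid_iff.1 (hA ▸ hab) v hv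

section Separating

variable {A : NonUnitalSubalgebra R (ι → R)}

theorem exists_evalOption_ne (hA : coordSetoid A = ⊥) {a b : Option ι} (hab : a ≠ b) :
    ∃ v ∈ A, evalOption R a v ≠ evalOption R b v := by
  have hnot : ¬ coordSetoid A a b := by rwa [hA]
  simpa [coordSetoid_iff] using hnot

variable [IsDomain R]

theorem exists_apply_ne_zero_and_forall_eq_zero (hA : coordSetoid A = ⊥) {i : ι}
    (s : Finset ι) (hi : i ∉ s) : ∃ u ∈ A, u i ≠ 0 ∧ ∀ j ∈ s, u j = 0 := by
  classical
  induction s using Finset.induction_on with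
  | empty => simpa using exists_evalOption_ne hA (Option.some_ne_none i)
  | insert j s _ ih =>
    rw [Finset.mem_insert, not_or] at hi
    obtain ⟨u, hu, hui, hus⟩ := ih hi.2
    obtain ⟨v, hv, hvij⟩ : ∃ v ∈ A, v i ≠ v j :=
      exists_evalOption_ne hA ((Option.some_injective ι).ne hi.1)
    refine ⟨v j • u - v * u, sub_mem (SMulMemClass.smul_mem _ hu) (mul_mem hv hu), ?_, ?_⟩
    · simpa [← sub_mul, sub_eq_zero, hui] using hvij.symm
    · simp +contextual [hus]

variable [Finite ι]

theorem exists_single_mem [DecidableEq ι] (hA : coordSetoid A = ⊥) (i : ι) :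
    ∃ d : R, d ≠ 0 ∧ Pi.single i d ∈ A := by
  have := Fintype.ofFinite ι
  obtain ⟨u, hu, hui, hu0⟩ :=
    exists_apply_ne_zero_and_forall_eq_zero hA _ (Finset.notMem_erase i Finset.univ)
  have single_eq : Pi.single i (u i) = u := by
    ext j
    obtain rfl | hj := eq_or_ne j i
    · simp
    · simp [hj, hu0]
  exact ⟨u i, hui, by rwa [single_eq]⟩

theorem isTorsion_quotient_of_coordSetoid_eq_bot (hA : coordSetoid A = ⊥) :
    Module.IsTorsion R ((ι → R) ⧸ A.toSubmodule) := by
  classical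
  have := Fintype.ofFinite ι
  suffices h : ∀ v, A.toSubmodule.mkQ v ∈ Submodule.torsion R ((ι → R) ⧸ A.toSubmodule) by
    intro q
    obtain ⟨v, rfl⟩ := A.toSubmodule.mkQ_surjective q
    exact (Submodule.mem_torsion_iff _).1 (h v)
  intro v
  rw [← Finset.univ_sum_single v, map_sum]
  refine sum_mem fun i _ => (Submodule.mem_torsion_iff _).2 ?_
  obtain ⟨d, hd, hdA⟩ := exists_single_mem hA i
  refine ⟨⟨d, mem_nonZeroDivisors_of_ne_zero hd⟩, ?_⟩
  have smul_single : d • (Pi.single i (v i) : ι → R) = v i • Pi.single i d := by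
    simp [← Pi.single_smul, mul_comm]
  rw [Submonoid.smul_def, ← map_smul, smul_single, Submodule.mkQ_apply,
    Submodule.Quotient.mk_eq_zero]
  exact A.smul_mem' _ hdA

end Separating

theorem coordSetoid_eq_bot_of_isTorsion_quotient [Nontrivial R]
    {A : NonUnitalSubalgebra R (ι → R)} (hA : Module.IsTorsion R ((ι → R) ⧸ A.toSubmodule)) :
    coordSetoid A = ⊥ := by
  refine le_bot_iff.1 fun a b hab => evalOption_injective (R := R) (DFunLike.ext _ _ fun v => ?_)
  obtain ⟨c, hc⟩ := @hA (Submodule.Quotient.mk v)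
  rw [Submonoid.smul_def, ← Submodule.Quotient.mk_smul, Submodule.Quotient.mk_eq_zero] at hc
  have eval_smul := coordSetoid_iff.1 hab _ hc
  rw [map_smul, map_smul, smul_eq_mul, smul_eq_mul] at eval_smul
  exact (mul_cancel_left_mem_nonZeroDivisors c.2).1 eval_smul

theorem coordSetoid_eq_bot_iff_finrank_eq [IsDomain R] [Finite ι]
    {A : NonUnitalSubalgebra R (ι → R)} :
    coordSetoid A = ⊥ ↔ Module.finrank R A.toSubmodule = Nat.card ι := by
  have := Fintype.ofFinite ι
  rw [Nat.card_eq_fintype_card, ← Module.finrank_fintype_fun_eq_card R,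
    ← isTorsion_quotient_iff_finrank_eq]
  exact ⟨isTorsion_quotient_of_coordSetoid_eq_bot, coordSetoid_eq_bot_of_isTorsion_quotient⟩

end CoordSetoid

section Fibers

variable {R ι κ : Type*} [CommRing R]

theorem exists_surjective_bind_ker_eq [Finite κ] {s : Setoid (Option ι)}
    (hs : Nat.card (Quotient s) = Nat.card κ + 1) :
    ∃ f : ι → Option κ,
      Function.Surjective (Option.bind · f) ∧ Setoid.ker (Option.bind · f) = s := by
  classical
  have : Finite (Quotient s) := Nat.finite_of_card_ne_zero (by omega)
  obtain ⟨e⟩ := Finite.card_eq.1 (hs.trans Finite.card_option.symm)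
  let e₀ : Quotient s ≃ Option κ := e.setValue ⟦none⟧ none
  have bind_eq : (Option.bind · fun i => e₀ ⟦some i⟧) = e₀ ∘ Quotient.mk s := by
    funext a
    cases a with
    | none => exact (e.setValue_eq _ _).symm
    | some i => rfl
  refine ⟨fun i => e₀ ⟦some i⟧, ?_, ?_⟩
  · rw [bind_eq]
    exact e₀.surjective.comp Quotient.mk_surjective
  · rw [bind_eq]
    ext a b
    rw [Setoid.ker_def, Function.comp_apply, Function.comp_apply, e₀.apply_eq_iff_eq]
    exact Quotient.eq

variable [IsDomain R]

theorem card_quotient_coordSetoid [Finite ι] (A : NonUnitalSubalgebra R (ι → R)) :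
    Nat.card (Quotient (coordSetoid A)) = Module.finrank R A.toSubmodule + 1 := by
  obtain ⟨n, hn⟩ := Nat.exists_eq_succ_of_ne_zero
    (Nat.card_pos (α := Quotient (coordSetoid A))).ne'
  obtain ⟨f, hf, hker⟩ := exists_surjective_bind_ker_eq (κ := Fin n) (by simpa using hn)
  obtain ⟨B, rfl⟩ := exists_map_pullback_eq hf hker.symm
  have hB := coordSetoid_eq_bot_iff_finrank_eq.1
    ((coordSetoid_map_pullback_eq_ker_iff hf).1 hker.symm)
  rw [hn, NonUnitalSubalgebra.map_toSubmodule,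
    ← (Submodule.equivMapOfInjective _ (pullback_injective hf) _).finrank_eq, hB, Nat.card_fin]

theorem card_torsion_quotient_map_pullback [Finite κ] {f : ι → Option κ}
    (hf : Function.Surjective (Option.bind · f)) {B : NonUnitalSubalgebra R (κ → R)}
    (hB : coordSetoid B = ⊥) :
    Nat.card (Submodule.torsion R ((ι → R) ⧸ (B.map (pullback R f)).toSubmodule)) =
      Nat.card ((κ → R) ⧸ B.toSubmodule) := by
  rw [NonUnitalSubalgebra.map_toSubmodule]
  exact card_torsion_quotient_map (pullback_injective hf)
    (fun _ hc _ => mem_range_pullback_of_smul_mem hf hc)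
    (isTorsion_quotient_of_coordSetoid_eq_bot hB)

theorem nonempty_equiv_coordSetoid_fiber [Finite κ] {s : Setoid (Option ι)}
    (hs : Nat.card (Quotient s) = Nat.card κ + 1) (r : ℕ) :
    Nonempty ({A : NonUnitalSubalgebra R (ι → R) // coordSetoid A = s ∧
        Nat.card (Submodule.torsion R ((ι → R) ⧸ A.toSubmodule)) = r} ≃
      {B : NonUnitalSubalgebra R (κ → R) // coordSetoid B = ⊥ ∧
        Nat.card ((κ → R) ⧸ B.toSubmodule) = r}) := by
  obtain ⟨f, hf, rfl⟩ := exists_surjective_bind_ker_eq hs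
  refine ⟨(Equiv.ofBijective (fun B => ⟨B.1.map (pullback R f),
    (coordSetoid_map_pullback_eq_ker_iff hf).2 B.2.1,
    (card_torsion_quotient_map_pullback hf B.2.1).trans B.2.2⟩) ⟨?_, ?_⟩).symm⟩
  · intro B B' h
    exact Subtype.ext
      (NonUnitalSubalgebra.map_injective (pullback_injective hf) (congrArg Subtype.val h))
  · rintro ⟨A, hA, hr⟩
    obtain ⟨B, rfl⟩ := exists_map_pullback_eq hf hA
    have hB := (coordSetoid_map_pullback_eq_ker_iff hf).1 hA
    exact ⟨⟨B, hB, (card_torsion_quotient_map_pullback hf hB).symm.trans hr⟩, rfl⟩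

end Fibers

section Counting

theorem card_subtype_eq_mul_of_fiber_equiv {α β γ : Type*} (g : α → β) (p : α → Prop)
    (q : β → Prop) (h : ∀ b, q b → Nonempty ({a // g a = b ∧ p a} ≃ γ)) :
    Nat.card {a // q (g a) ∧ p a} = Nat.card {b // q b} * Nat.card γ := by
  let fiberEquiv : {a // q (g a) ∧ p a} ≃ Σ b : Subtype q, {a // g a = b.1 ∧ p a} :=
    { toFun a := ⟨⟨g a, a.2.1⟩, a, rfl, a.2.2⟩
      invFun x := ⟨x.2, by rw [x.2.2.1]; exact x.1.2, x.2.2.2⟩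
      left_inv _ := rfl
      right_inv := by
        rintro ⟨⟨b, hb⟩, a, hab, ha⟩
        obtain rfl : g a = b := hab
        rfl }
  rw [← Nat.card_prod, Nat.card_congr fiberEquiv]
  exact Nat.card_congr
    ((Equiv.sigmaCongrRight fun b : Subtype q => (h b.1 b.2).some).trans
      (Equiv.sigmaEquivProd _ _))

theorem card_isMulClosed_and {n : ℕ} (P : Submodule ℤ (Fin n → ℤ) → Prop) :
    Nat.card {L : Submodule ℤ (Fin n → ℤ) // IsMulClosed L ∧ P L} =
      Nat.card {A : NonUnitalSubalgebra ℤ (Fin n → ℤ) // P A.toSubmodule} :=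
  Nat.card_congr
    { toFun L := ⟨L.1.toNonUnitalSubalgebra fun u v hu hv => L.2.1 u hu v hv, L.2.2⟩
      invFun A := ⟨A.1.toSubmodule, fun _ hu _ hv => A.1.mul_mem' hu hv, A.2⟩
      left_inv _ := rfl
      right_inv _ := rfl }

theorem phi_eq_card_coordSetoid_eq_bot (n r : ℕ) :
    phi n r = Nat.card {B : NonUnitalSubalgebra ℤ (Fin n → ℤ) //
      coordSetoid B = ⊥ ∧ Nat.card ((Fin n → ℤ) ⧸ B.toSubmodule) = r} := by
  simp only [coordSetoid_eq_bot_iff_finrank_eq, Nat.card_fin]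
  exact card_isMulClosed_and _

theorem phiCorank_eq_card_coordSetoid (n k r : ℕ) :
    phiCorank (n + k) k r = Nat.card {A : NonUnitalSubalgebra ℤ (Fin (n + k) → ℤ) //
      Nat.card (Quotient (coordSetoid A)) = n + 1 ∧
        Nat.card (Submodule.torsion ℤ ((Fin (n + k) → ℤ) ⧸ A.toSubmodule)) = r} := by
  simp only [card_quotient_coordSetoid, Nat.add_right_cancel_iff]
  rw [phiCorank, Nat.add_sub_cancel]
  exact card_isMulClosed_and _

theorem card_setoid_congr {α β : Type*} (e : α ≃ β) (v : ℕ) :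
    Nat.card {s : Setoid α // Nat.card (Quotient s) = v} =
      Nat.card {s : Setoid β // Nat.card (Quotient s) = v} := by
  let setoidEquiv : Setoid α ≃ Setoid β :=
    { toFun s := s.comap e.symm
      invFun s := s.comap e
      left_inv s := by ext a b; simp [Setoid.comap_rel]
      right_inv s := by ext a b; simp [Setoid.comap_rel] }
  refine Nat.card_congr (setoidEquiv.subtypeEquiv fun s => ?_)
  have quotientEquiv : Quotient s ≃ Quotient (setoidEquiv s) :=
    Quotient.congr e fun a b => by
      change s a b ↔ s (e.symm (e a)) (e.symm (e b))
      rw [e.symm_apply_apply, e.symm_apply_apply]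
  rw [Nat.card_congr quotientEquiv]

theorem card_setoid_eq_card_isPartition (α : Type*) (v : ℕ) :
    Nat.card {s : Setoid α // Nat.card (Quotient s) = v} =
      Nat.card {C : Set (Set α) // Setoid.IsPartition C ∧ C.ncard = v} := by
  let classesEquiv : Setoid α ≃ {C : Set (Set α) // Setoid.IsPartition C} :=
    (Setoid.Partition.orderIso α).toEquiv
  have card_quotient (s : Setoid α) : Nat.card (Quotient s) = (classesEquiv s).1.ncard :=
    Nat.card_congr (Setoid.quotientEquivClasses s)
  simp only [card_quotient]
  exact Nat.card_congr ((classesEquiv.subtypeEquiv fun _ => Iff.rfl).trans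
    (Equiv.subtypeSubtypeEquivSubtypeInter _ (Set.ncard · = v)))

theorem isPartition_image_coe_iff {α : Type*} (S : Finset (Finset α)) :
    Setoid.IsPartition ((↑) '' (S : Set (Finset α)) : Set (Set α)) ↔
      (∀ t ∈ S, t.Nonempty) ∧ ∀ a, ∃! t, t ∈ S ∧ a ∈ t := by
  refine and_congr ?_ (forall_congr' fun a => ?_)
  · simp [Finset.nonempty_iff_ne_empty, imp_not_comm]
  · simp [ExistsUnique]

theorem stirlingSecond_eq_card_setoid {α : Type*} [Finite α] {u : ℕ} (hα : Nat.card α = u)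
    (v : ℕ) :
    stirlingSecond u v = Nat.card {s : Setoid α // Nat.card (Quotient s) = v} := by
  rw [card_setoid_congr (Finite.equivFinOfCardEq hα), card_setoid_eq_card_isPartition]
  let finsetEquiv : Finset (Finset (Fin u)) ≃ Set (Set (Fin u)) :=
    Fintype.finsetEquivSet.trans (Equiv.Set.congr Fintype.finsetEquivSet)
  refine Nat.card_congr (finsetEquiv.subtypeEquiv fun S => ?_)
  have ncard_eq : (finsetEquiv S).ncard = S.card :=
    (Set.ncard_image_of_injective _ Finset.coe_injective).trans (Set.ncard_coe_finset S)
  rw [ncard_eq, ← isPartition_image_coe_iff, and_comm]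
  rfl

end Counting

theorem phiCorank_eq_stirling_mul_phi (n k r : ℕ) (hn : 1 ≤ n) (hr : 1 ≤ r) :
    phiCorank (n + k) k r = stirlingSecond (n + k + 1) (n + 1) * phi n r := by
  rw [phiCorank_eq_card_coordSetoid, phi_eq_card_coordSetoid_eq_bot,
    stirlingSecond_eq_card_setoid (α := Option (Fin (n + k))) (by simp)]
  refine card_subtype_eq_mul_of_fiber_equiv coordSetoid _
    (fun s => Nat.card (Quotient s) = n + 1) ?_
  intro s hs
  exact nonempty_equiv_coordSetoid_fiber (by rwa [Nat.card_fin]) r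
end

section
/- For any acceptable map g : ℤ^n → ℤ^{n+k} and any ℤ-submodule L of ℤ^n of full rank n, the cardinality of the torsion subgroup of the quotient group ℤ^{n+k} / g(L) equals the index [ℤ^n : L]. -/
/-- An acceptable map `ℤ^n → ℤ^{n+k}` is an injective map each of whose output
coordinates is either one of the input coordinates or identically `0`. -/
def IsAcceptable {n k : ℕ} (g : (Fin n → ℤ) → (Fin (n + k) → ℤ)) : Prop :=
  Function.Injective g ∧
    ∀ j : Fin (n + k), (∃ i : Fin n, ∀ x, g x j = x i) ∨ ∀ x, g x j = 0

/-!
An acceptable map `g` is linear, and by injectivity each input coordinate survives as some output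
coordinate, so a coordinate projection is a left inverse of `g`. Hence the cokernel of `g` is
torsion-free. In the exact sequence `0 → ℤ^n / L → ℤ^{n+k} / g(L) → ℤ^{n+k} / g(ℤ^n) → 0` the left
term is finite and the right one is torsion-free, so the left term is the torsion of the middle one.
-/

section Module

variable {R M N : Type*} [AddCommGroup M] [AddCommGroup N]

theorem isTorsionFree_quotient_range_of_leftInverse [Ring R] [Module R M] [Module R N]
    [Module.IsTorsionFree R N] {f : M →ₗ[R] N} {r : N →ₗ[R] M} (h : Function.LeftInverse r f) :
    Module.IsTorsionFree R (N ⧸ LinearMap.range f) := by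
  let complement : N →ₗ[R] N := LinearMap.id - f ∘ₗ r
  have hker : LinearMap.range f = LinearMap.ker complement := by
    rw [LinearMap.range_eq_ker_of_leftInverse h, ← neg_sub, LinearMap.ker_neg]
  rw [hker]
  let embedding := complement.ker.liftQ complement le_rfl
  have hembedding : Function.Injective embedding :=
    LinearMap.ker_eq_bot.mp (Submodule.ker_liftQ_eq_bot _ _ _ le_rfl)
  exact hembedding.moduleIsTorsionFree embedding (map_smul embedding)

theorem mapQ_map_injective [Ring R] [Module R M] [Module R N] {f : M →ₗ[R] N}
    (hf : Function.Injective f) (L : Submodule R M) :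
    Function.Injective (L.mapQ (L.map f) f (L.le_comap_map f)) := by
  rw [← LinearMap.ker_eq_bot, Submodule.ker_mapQ, Submodule.comap_map_eq_of_injective hf,
    Submodule.mkQ_map_self]

variable [CommRing R] [Module R M] [Module R N]

theorem range_mapQ_map_eq_torsion_s8 (f : M →ₗ[R] N)
    [Module.IsTorsionFree R (N ⧸ LinearMap.range f)] (L : Submodule R M)
    (hL : Module.IsTorsion R (M ⧸ L)) :
    LinearMap.range (L.mapQ (L.map f) f (L.le_comap_map f)) =
      Submodule.torsion R (N ⧸ L.map f) := by
  apply le_antisymm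
  · rintro _ ⟨q, rfl⟩
    obtain ⟨a, ha⟩ := @hL q
    exact (Submodule.mem_torsion_iff _).mpr ⟨a, by
      rw [Submonoid.smul_def, ← map_smul, ← Submonoid.smul_def, ha, map_zero]⟩
  · intro q hq
    obtain ⟨y, rfl⟩ := Submodule.mkQ_surjective _ q
    obtain ⟨a, ha⟩ := (Submodule.mem_torsion_iff _).mp hq
    have smul_mem_map : (a : R) • y ∈ L.map f := (Submodule.Quotient.mk_eq_zero _).mp ha
    have smul_mk_eq_zero : (a : R) • (LinearMap.range f).mkQ y = 0 :=
      (Submodule.Quotient.mk_eq_zero _).mpr (LinearMap.map_le_range smul_mem_map)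
    have mem_range : y ∈ LinearMap.range f := by
      rwa [(isRegular_iff_mem_nonZeroDivisors.mpr a.2).smul_eq_zero_iff_right,
        Submodule.mkQ_apply, Submodule.Quotient.mk_eq_zero] at smul_mk_eq_zero
    rw [Submodule.range_mapQ]
    exact Submodule.mem_map_of_mem mem_range

/-- If `f : M → N` is injective with torsion-free cokernel and `M / L` is torsion, then `f`
identifies `M / L` with the torsion submodule of `N / f(L)`. -/
noncomputable def quotientEquivTorsionQuotientMap {f : M →ₗ[R] N} (hf : Function.Injective f)
    [Module.IsTorsionFree R (N ⧸ LinearMap.range f)] (L : Submodule R M)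
    (hL : Module.IsTorsion R (M ⧸ L)) :
    (M ⧸ L) ≃ₗ[R] Submodule.torsion R (N ⧸ L.map f) :=
  (LinearEquiv.ofInjective _ (mapQ_map_injective hf L)).trans
    (LinearEquiv.ofEq _ _ (range_mapQ_map_eq_torsion_s8 f L hL))

end Module

theorem torsion_card_eq_index_general {M N : Type*} [AddCommGroup M] [AddCommGroup N]
    {f : M →ₗ[ℤ] N} (hf : Function.Injective f) [Module.IsTorsionFree ℤ (N ⧸ LinearMap.range f)]
    (L : Submodule ℤ M) [Finite (M ⧸ L)] :
    Nat.card (Submodule.torsion ℤ (N ⧸ L.map f)) = L.toAddSubgroup.index :=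
  have hL : Module.IsTorsion ℤ (M ⧸ L) := isAddTorsion_iff_isTorsion_int.mp isAddTorsion_of_finite
  (Nat.card_congr (quotientEquivTorsionQuotientMap hf L hL).toEquiv).symm

namespace IsAcceptable

variable {n k : ℕ} {g : (Fin n → ℤ) → (Fin (n + k) → ℤ)}

theorem isLinearMap (hg : IsAcceptable g) : IsLinearMap ℤ g where
  map_add x y := by
    ext j
    rcases hg.2 j with ⟨i, hi⟩ | hzero
    · simp [hi]
    · simp [hzero]
  map_smul c x := by
    ext j
    rcases hg.2 j with ⟨i, hi⟩ | hzero
    · simp [hi]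
    · simp [hzero]

theorem exists_forall_apply_eq (hg : IsAcceptable g) (i : Fin n) : ∃ j, ∀ x, g x j = x i := by
  by_contra! hmissing
  have map_single : g (Pi.single i 1) = g 0 := by
    ext j
    rcases hg.2 j with ⟨i', hi'⟩ | hzero
    · have hne : i' ≠ i := by
        rintro rfl
        obtain ⟨x, hx⟩ := hmissing j
        exact hx (hi' x)
      simp [hi', hne]
    · simp [hzero]
  simpa using congrFun (hg.1 map_single) i

theorem isTorsionFree_quotient_range (hg : IsAcceptable g) :
    Module.IsTorsionFree ℤ ((Fin (n + k) → ℤ) ⧸ LinearMap.range (hg.isLinearMap.mk' g)) := by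
  choose s hs using hg.exists_forall_apply_eq
  have hleft : Function.LeftInverse (LinearMap.funLeft ℤ ℤ s) (hg.isLinearMap.mk' g) :=
    fun x ↦ funext fun i ↦ hs i x
  exact isTorsionFree_quotient_range_of_leftInverse hleft

end IsAcceptable

/-- For an acceptable map `g` and a full rank sublattice `L` of `ℤ^n`, the torsion
subgroup of `ℤ^{n+k}/g(L)` has cardinality equal to the index `[ℤ^n : L]`. -/
theorem torsion_card_eq_index (n k : ℕ) (g : (Fin n → ℤ) → (Fin (n + k) → ℤ))
    (hg : IsAcceptable g) (L : Submodule ℤ (Fin n → ℤ))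
    (hrank : Module.finrank ℤ L = n) :
    Nat.card (Submodule.torsion ℤ
        ((Fin (n + k) → ℤ) ⧸ Submodule.span ℤ (g '' (L : Set (Fin n → ℤ))))) =
      L.toAddSubgroup.index := by
  have hspan : Submodule.span ℤ (g '' (L : Set (Fin n → ℤ))) = L.map (hg.isLinearMap.mk' g) :=
    Submodule.span_eq (L.map (hg.isLinearMap.mk' g))
  have := L.finiteQuotientOfFreeOfRankEq (hrank.trans (Module.finrank_fin_fun ℤ).symm)
  have := hg.isTorsionFree_quotient_range
  rw [hspan]
  exact torsion_card_eq_index_general (f := hg.isLinearMap.mk' g) hg.1 L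
end

section
/- There is a bijection between the set of ordered acceptable maps ℤ^n → ℤ^{n+k} and the set of partitions of {0, 1, …, n+k} into n+1 nonempty parts, given by sending an ordered acceptable map g to the partition {A_0^g, A_1^g, …, A_n^g}, where A_i^g (for 1 ≤ i ≤ n) is the set of output coordinates of g carrying x_i and A_0^g = {0,1,…,n+k} \ (A_1^g ∪ … ∪ A_n^g). -/
open Classical in
/-- `A_i^g`: the set of output coordinates of `g` carrying the input coordinate `x i`. -/
noncomputable def coordSet {n k : ℕ} (g : (Fin n → ℤ) → (Fin (n + k) → ℤ))
    (i : Fin n) : Finset (Fin (n + k)) :=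
  Finset.univ.filter fun j => ∀ x, g x j = x i

/-- An acceptable map `g` is ordered if `min A_i^g < min A_j^g` whenever `i < j`. -/
def IsOrdered {n k : ℕ} (g : (Fin n → ℤ) → (Fin (n + k) → ℤ)) : Prop :=
  ∀ i₁ i₂ : Fin n, i₁ < i₂ → (coordSet g i₁).min < (coordSet g i₂).min

/-- The collection `{A_0^g, A_1^g, …, A_n^g}` of subsets of `{0, 1, …, n+k}`
(realized as `Fin (n+k+1)`, with the output coordinate `j ∈ {1,…,n+k}` of `g`
corresponding to `Fin.succ j`, and `A_0^g` the complement of `A_1^g ∪ ⋯ ∪ A_n^g`). -/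
noncomputable def partsOf {n k : ℕ} (g : (Fin n → ℤ) → (Fin (n + k) → ℤ)) :
    Finset (Finset (Fin (n + k + 1))) :=
  insert
    (Finset.univ \ Finset.univ.biUnion fun i : Fin n => (coordSet g i).image Fin.succ)
    (Finset.univ.image fun i : Fin n => (coordSet g i).image Fin.succ)

/-!
An acceptable map is determined by its coordinate sets `A_1, …, A_n`, and every family of nonempty
pairwise disjoint sets arises in this way. Adding `0` to the index set distinguishes one part of a
partition, the one containing `0`, which is the complement of the others; hence partitions of
`{0, …, m}` into `n + 1` parts correspond to unordered collections of `n` disjoint nonempty subsets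
of `{1, …, m}`. Disjoint nonempty sets have distinct minima, so listing such a collection by
increasing minimum is possible in exactly one way.
-/

section SortedEnumeration

theorem eq_of_range_eq_of_strictMono_comp {ι β γ : Type*} [LinearOrder ι] [WellFoundedLT ι]
    [Preorder γ] (f : β → γ) {s t : ι → β} (hs : StrictMono (f ∘ s)) (ht : StrictMono (f ∘ t))
    (h : Set.range s = Set.range t) : s = t := by
  have comp_eq : f ∘ s = f ∘ t :=
    (hs.range_inj ht).1 (by rw [Set.range_comp, Set.range_comp, h])
  funext i
  obtain ⟨j, hj⟩ : s i ∈ Set.range t := h ▸ Set.mem_range_self i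
  have hji : j = i := ht.injective ((congrArg f hj).trans (congrFun comp_eq i))
  rw [← hj, hji]

theorem exists_image_eq_and_strictMono_comp {β γ : Type*} [DecidableEq β] [LinearOrder γ]
    (f : β → γ) {s : Finset β} (hf : Set.InjOn f s) {n : ℕ} (hs : s.card = n) :
    ∃ e : Fin n → β, Finset.univ.image e = s ∧ StrictMono (f ∘ e) := by
  have card_image : (s.image f).card = n := by rw [Finset.card_image_of_injOn hf, hs]
  choose e e_mem f_e using fun i =>
    Finset.mem_image.1 (Finset.orderEmbOfFin_mem (s.image f) card_image i)
  have strictMono_f_e : StrictMono (f ∘ e) := by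
    rw [show f ∘ e = (s.image f).orderEmbOfFin card_image from funext f_e]
    exact OrderEmbedding.strictMono _
  refine ⟨e, Finset.eq_of_subset_of_card_le (Finset.image_subset_iff.2 fun i _ => e_mem i) ?_,
    strictMono_f_e⟩
  rw [Finset.card_image_of_injective _ strictMono_f_e.injective.of_comp, Finset.card_fin, hs]

end SortedEnumeration

section Minima

variable {α β : Type*} [LinearOrder α] [LinearOrder β]

theorem injOn_min_of_pairwiseDisjoint {S : Set (Finset α)} (hne : ∀ t ∈ S, t.Nonempty)
    (hd : S.PairwiseDisjoint id) : Set.InjOn Finset.min S := by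
  intro s hs t ht hst
  obtain ⟨a, ha⟩ := Finset.min_of_nonempty (hne s hs)
  exact hd.elim_finset hs ht a (Finset.mem_of_min ha) (Finset.mem_of_min (hst ▸ ha))

theorem min_image_of_monotone {f : α → β} (hf : Monotone f) (s : Finset α) :
    (s.image f).min = s.min.map f := by
  induction s using Finset.induction_on with
  | empty => rfl
  | insert a s _ ih =>
    rw [Finset.image_insert, Finset.min_insert, Finset.min_insert, ih,
      hf.withTop_map.map_min, WithTop.map_coe]

end Minima

section Partitions

/-- `S` is a partition of `α` into `r` nonempty parts. -/
def IsPartitionInto {α : Type*} (r : ℕ) (S : Finset (Finset α)) : Prop :=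
  S.card = r ∧ (∀ t ∈ S, t.Nonempty) ∧ ∀ a, ∃! t, t ∈ S ∧ a ∈ t

theorem IsPartitionInto.pairwiseDisjoint {α : Type*} {r : ℕ} {S : Finset (Finset α)}
    (hS : IsPartitionInto r S) : (S : Set (Finset α)).PairwiseDisjoint id :=
  fun _s hs _t ht hst => Finset.disjoint_left.2 fun a has hat =>
    hst ((hS.2.2 a).unique ⟨hs, has⟩ ⟨ht, hat⟩)

variable {α ι : Type*} [Fintype α] [DecidableEq α] [Fintype ι]

/-- The members of the family `B` together with the complement of their union. For disjoint
nonempty blocks that do not cover `α`, this completes them to a partition of `α`. -/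
def completedParts (B : ι → Finset α) : Finset (Finset α) :=
  insert (Finset.univ \ Finset.univ.biUnion B) (Finset.univ.image B)

theorem mem_completedParts {B : ι → Finset α} {t : Finset α} :
    t ∈ completedParts B ↔ t = Finset.univ \ Finset.univ.biUnion B ∨ ∃ i, B i = t := by
  simp [completedParts]

theorem mem_univ_sdiff_biUnion {B : ι → Finset α} {a : α} :
    a ∈ Finset.univ \ Finset.univ.biUnion B ↔ ∀ i, a ∉ B i := by
  simp

theorem filter_notMem_completedParts {B : ι → Finset α} {a : α} (ha : ∀ i, a ∉ B i) :
    (completedParts B).filter (a ∉ ·) = Finset.univ.image B := by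
  rw [completedParts, Finset.filter_insert,
    if_neg (not_not_intro (mem_univ_sdiff_biUnion.2 ha)), Finset.filter_true_of_mem]
  simpa using ha

theorem existsUnique_mem_completedParts {B : ι → Finset α}
    (hd : Pairwise (Function.onFun Disjoint B)) (a : α) : ∃! t, t ∈ completedParts B ∧ a ∈ t := by
  by_cases ha : ∃ i, a ∈ B i
  · obtain ⟨i, hi⟩ := ha
    refine ⟨B i, ⟨mem_completedParts.2 (.inr ⟨i, rfl⟩), hi⟩, ?_⟩
    rintro t ⟨ht, hat⟩
    obtain rfl | ⟨j, rfl⟩ := mem_completedParts.1 ht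
    · exact absurd hi (mem_univ_sdiff_biUnion.1 hat i)
    · exact congrArg B (hd.eq (Finset.not_disjoint_iff.2 ⟨a, hat, hi⟩))
  · push Not at ha
    refine ⟨_, ⟨mem_completedParts.2 (.inl rfl), mem_univ_sdiff_biUnion.2 ha⟩, ?_⟩
    rintro t ⟨ht, hat⟩
    obtain rfl | ⟨j, rfl⟩ := mem_completedParts.1 ht
    · rfl
    · exact absurd hat (ha j)

theorem isPartitionInto_completedParts {B : ι → Finset α} (hne : ∀ i, (B i).Nonempty)
    (hd : Pairwise (Function.onFun Disjoint B)) {a : α} (ha : ∀ i, a ∉ B i) :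
    IsPartitionInto (Fintype.card ι + 1) (completedParts B) := by
  have a_mem : a ∈ Finset.univ \ Finset.univ.biUnion B := mem_univ_sdiff_biUnion.2 ha
  have B_injective : Function.Injective B := fun i j hij =>
    hd.eq fun hdisj => (hne i).ne_empty (disjoint_self.1 (hdisj.mono_right hij.le))
  refine ⟨?_, ?_, existsUnique_mem_completedParts hd⟩
  · rw [completedParts, Finset.card_insert_of_notMem, Finset.card_image_of_injective _ B_injective,
      Finset.card_univ]
    intro hmem
    obtain ⟨i, -, hi⟩ := Finset.mem_image.1 hmem
    exact ha i (hi ▸ a_mem)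
  · intro t ht
    obtain rfl | ⟨i, rfl⟩ := mem_completedParts.1 ht
    exacts [⟨a, a_mem⟩, hne i]

theorem completedParts_eq_of_image_eq_erase {r : ℕ} {S : Finset (Finset α)}
    (hS : IsPartitionInto r S) {c : Finset α} (hc : c ∈ S) {B : ι → Finset α}
    (hB : Finset.univ.image B = S.erase c) : completedParts B = S := by
  have B_mem (i : ι) : B i ∈ S.erase c := hB ▸ Finset.mem_image_of_mem B (Finset.mem_univ i)
  have complement_eq : Finset.univ \ Finset.univ.biUnion B = c := by
    ext a
    rw [mem_univ_sdiff_biUnion]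
    constructor
    · intro ha
      obtain ⟨t, ⟨htS, hat⟩, -⟩ := hS.2.2 a
      by_contra hac
      have ht : t ∈ Finset.univ.image B :=
        hB ▸ Finset.mem_erase.2 ⟨fun htc => hac (htc ▸ hat), htS⟩
      obtain ⟨i, -, rfl⟩ := Finset.mem_image.1 ht
      exact ha i hat
    · intro hac i hai
      obtain ⟨hne, hBS⟩ := Finset.mem_erase.1 (B_mem i)
      exact hne (hS.pairwiseDisjoint.elim_finset hBS hc a hai hac)
  rw [completedParts, complement_eq, hB, Finset.insert_erase hc]

end Partitions

section OrderedBlocks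

/-- A family of nonempty, pairwise disjoint finite sets, listed by increasing minimum. -/
structure IsOrderedBlocks {α : Type*} [LinearOrder α] {n : ℕ} (B : Fin n → Finset α) : Prop where
  nonempty : ∀ i, (B i).Nonempty
  disjoint : Pairwise (Function.onFun Disjoint B)
  strictMono_min : StrictMono (Finset.min ∘ B)

theorem isOrderedBlocks_image_iff {α β : Type*} [LinearOrder α] [LinearOrder β] {f : α → β}
    (hf : StrictMono f) {n : ℕ} {A : Fin n → Finset α} :
    IsOrderedBlocks (fun i => (A i).image f) ↔ IsOrderedBlocks A := by
  have min_comp_image : (Finset.min ∘ fun i => (A i).image f) = WithTop.map f ∘ Finset.min ∘ A :=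
    funext fun i => min_image_of_monotone hf.monotone (A i)
  have strictMono_iff : StrictMono (WithTop.map f ∘ Finset.min ∘ A) ↔ StrictMono (Finset.min ∘ A) :=
    ⟨fun h _ _ hij => hf.withTop_map.lt_iff_lt.1 (h hij), hf.withTop_map.comp⟩
  constructor
  · rintro ⟨hne, hd, hmin⟩
    exact ⟨fun i => Finset.image_nonempty.1 (hne i),
      fun i j hij => (Finset.disjoint_image hf.injective).1 (hd hij),
      strictMono_iff.1 (min_comp_image ▸ hmin)⟩
  · rintro ⟨hne, hd, hmin⟩
    exact ⟨fun i => (hne i).image f, fun i j hij => (Finset.disjoint_image hf.injective).2 (hd hij),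
      min_comp_image ▸ strictMono_iff.2 hmin⟩

theorem bijOn_image_of_strictMono {α β : Type*} [LinearOrder α] [LinearOrder β] {f : α → β}
    (hf : StrictMono f) (n : ℕ) :
    Set.BijOn (fun (A : Fin n → Finset α) i => (A i).image f)
      {A | IsOrderedBlocks A} {B | IsOrderedBlocks B ∧ ∀ i, (B i : Set β) ⊆ Set.range f} := by
  refine ⟨fun A hA => ⟨(isOrderedBlocks_image_iff hf).2 hA, fun i => ?_⟩, ?_, ?_⟩
  · rw [Finset.coe_image]
    exact Set.image_subset_range f _
  · intro A _ A' _ h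
    funext i
    exact Finset.image_injective hf.injective (congrFun h i)
  · rintro B ⟨hB, hrange⟩
    simp only [← Set.image_univ, Finset.subset_set_image_iff] at hrange
    choose A _ hA using hrange
    obtain rfl : (fun i => (A i).image f) = B := funext hA
    exact ⟨A, (isOrderedBlocks_image_iff hf).1 hB, rfl⟩

theorem bijOn_image_succ (n m : ℕ) :
    Set.BijOn (fun (A : Fin n → Finset (Fin m)) i => (A i).image Fin.succ)
      {A | IsOrderedBlocks A} {B | IsOrderedBlocks B ∧ ∀ i, 0 ∉ B i} := by
  simpa only [Fin.range_succ, Set.subset_compl_singleton_iff, Finset.mem_coe] using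
    bijOn_image_of_strictMono Fin.strictMono_succ n

theorem bijOn_completedParts {α : Type*} [Fintype α] [LinearOrder α] (a₀ : α) (n : ℕ) :
    Set.BijOn (completedParts : (Fin n → Finset α) → Finset (Finset α))
      {B | IsOrderedBlocks B ∧ ∀ i, a₀ ∉ B i} {S | IsPartitionInto (n + 1) S} := by
  refine ⟨?_, ?_, ?_⟩
  · rintro B ⟨hB, ha₀⟩
    simpa using isPartitionInto_completedParts hB.nonempty hB.disjoint ha₀
  · rintro B ⟨hB, ha₀⟩ B' ⟨hB', ha₀'⟩ h
    refine eq_of_range_eq_of_strictMono_comp Finset.min hB.strictMono_min hB'.strictMono_min ?_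
    have image_eq : Finset.univ.image B = Finset.univ.image B' := by
      rw [← filter_notMem_completedParts ha₀, ← filter_notMem_completedParts ha₀', h]
    simpa using congrArg (fun s : Finset (Finset α) => (s : Set (Finset α))) image_eq
  · intro S hS
    obtain ⟨c, ⟨hcS, ha₀c⟩, -⟩ := hS.2.2 a₀
    have erase_subset : ((S.erase c : Finset (Finset α)) : Set (Finset α)) ⊆ S :=
      Finset.coe_subset.2 (Finset.erase_subset c S)
    have injOn_min : Set.InjOn Finset.min (S : Set (Finset α)) :=
      injOn_min_of_pairwiseDisjoint hS.2.1 hS.pairwiseDisjoint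
    obtain ⟨B, hB, hmin⟩ := exists_image_eq_and_strictMono_comp Finset.min
      (injOn_min.mono erase_subset) (n := n) (by rw [Finset.card_erase_of_mem hcS, hS.1]; rfl)
    have B_mem (i : Fin n) : B i ≠ c ∧ B i ∈ S :=
      Finset.mem_erase.1 (hB ▸ Finset.mem_image_of_mem B (Finset.mem_univ i))
    refine ⟨B, ⟨⟨fun i => hS.2.1 _ (B_mem i).2, fun i j hij => ?_, hmin⟩, fun i hi => ?_⟩,
      completedParts_eq_of_image_eq_erase hS hcS hB⟩
    · exact hS.pairwiseDisjoint (B_mem i).2 (B_mem j).2 (hmin.injective.of_comp.ne hij)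
    · exact (B_mem i).1 (hS.pairwiseDisjoint.elim_finset (B_mem i).2 hcS a₀ hi ha₀c)

end OrderedBlocks

section CoordMap

variable {ι κ M : Type*} [Fintype ι] [DecidableEq κ] [AddCommMonoid M]

/-- The map whose `j`-th output is the sum of those inputs `x i` with `j ∈ A i`. When the sets
`A i` are disjoint the sum has at most one term, so it copies `x i` to the coordinates in `A i`
and puts `0` elsewhere. -/
def coordMap (A : ι → Finset κ) (x : ι → M) (j : κ) : M :=
  ∑ i with j ∈ A i, x i

theorem coordMap_of_mem {A : ι → Finset κ} (hd : Pairwise (Function.onFun Disjoint A)) {i : ι}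
    {j : κ} (hj : j ∈ A i) (x : ι → M) : coordMap A x j = x i := by
  have filter_eq : Finset.univ.filter (j ∈ A ·) = {i} := by
    ext i'
    simp only [Finset.mem_filter_univ, Finset.mem_singleton]
    exact ⟨fun hj' => hd.eq (Finset.not_disjoint_iff.2 ⟨j, hj', hj⟩), fun h => h ▸ hj⟩
  rw [coordMap, filter_eq, Finset.sum_singleton]

theorem coordMap_of_forall_notMem {A : ι → Finset κ} {j : κ} (hj : ∀ i, j ∉ A i) (x : ι → M) :
    coordMap A x j = 0 := by
  rw [coordMap, Finset.filter_false_of_mem fun i _ => hj i, Finset.sum_empty]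

end CoordMap

section Acceptable

variable {n k : ℕ}

theorem mem_coordSet {g : (Fin n → ℤ) → Fin (n + k) → ℤ} {i : Fin n} {j : Fin (n + k)} :
    j ∈ coordSet g i ↔ ∀ x, g x j = x i := by
  simp [coordSet]

theorem pairwise_disjoint_coordSet (g : (Fin n → ℤ) → Fin (n + k) → ℤ) :
    Pairwise (Function.onFun Disjoint (coordSet g)) := by
  refine fun i i' hne => Finset.disjoint_left.2 fun j hj hj' => ?_
  have single_eq : (Pi.single i 1 : Fin n → ℤ) i = (Pi.single i 1 : Fin n → ℤ) i' :=
    (mem_coordSet.1 hj _).symm.trans (mem_coordSet.1 hj' _)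
  simp [hne.symm] at single_eq

theorem IsAcceptable.coordMap_coordSet {g : (Fin n → ℤ) → Fin (n + k) → ℤ}
    (hg : IsAcceptable g) : coordMap (coordSet g) = g := by
  funext x j
  by_cases hj : ∃ i, j ∈ coordSet g i
  · obtain ⟨i, hi⟩ := hj
    rw [coordMap_of_mem (pairwise_disjoint_coordSet g) hi, mem_coordSet.1 hi]
  · have g_zero : ∀ x, g x j = 0 :=
      (hg.2 j).resolve_left fun ⟨i, hi⟩ => hj ⟨i, mem_coordSet.2 hi⟩
    rw [coordMap_of_forall_notMem (not_exists.1 hj), g_zero]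

theorem IsAcceptable.coordSet_nonempty {g : (Fin n → ℤ) → Fin (n + k) → ℤ}
    (hg : IsAcceptable g) (i : Fin n) : (coordSet g i).Nonempty := by
  by_contra hempty
  rw [Finset.not_nonempty_iff_eq_empty] at hempty
  have g_single : g (Pi.single i 1) = g 0 := by
    rw [← hg.coordMap_coordSet]
    funext j
    refine Finset.sum_congr rfl fun i' hi' => Pi.single_eq_of_ne ?_ 1
    rintro rfl
    simp [hempty] at hi'
  simpa using congrFun (hg.1 g_single) i

theorem isAcceptable_coordMap {A : Fin n → Finset (Fin (n + k))} (hne : ∀ i, (A i).Nonempty)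
    (hd : Pairwise (Function.onFun Disjoint A)) : IsAcceptable (coordMap A) := by
  refine ⟨fun x y hxy => funext fun i => ?_, fun j => ?_⟩
  · obtain ⟨j, hj⟩ := hne i
    rw [← coordMap_of_mem hd hj x, ← coordMap_of_mem hd hj y, hxy]
  · by_cases hj : ∃ i, j ∈ A i
    · exact .inl (hj.imp fun i hi => coordMap_of_mem hd hi)
    · exact .inr (coordMap_of_forall_notMem (not_exists.1 hj))

theorem coordSet_coordMap {A : Fin n → Finset (Fin (n + k))}
    (hd : Pairwise (Function.onFun Disjoint A)) : coordSet (coordMap A) = A := by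
  funext i
  ext j
  refine mem_coordSet.trans ⟨fun h => ?_, fun hj => coordMap_of_mem hd hj⟩
  by_contra hj
  have sum_single : ∑ i' with j ∈ A i', (Pi.single i 1 : Fin n → ℤ) i' = 1 := by
    simpa [coordMap] using h (Pi.single i 1)
  simp [hj] at sum_single

theorem bijOn_coordSet (n k : ℕ) :
    Set.BijOn (coordSet : ((Fin n → ℤ) → Fin (n + k) → ℤ) → Fin n → Finset (Fin (n + k)))
      {g | IsAcceptable g ∧ IsOrdered g} {A | IsOrderedBlocks A} := by
  refine Set.InvOn.bijOn (f' := coordMap)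
    ⟨fun g hg => hg.1.coordMap_coordSet, fun A hA => coordSet_coordMap hA.disjoint⟩ ?_ ?_
  · rintro g ⟨hg, hord⟩
    exact ⟨hg.coordSet_nonempty, pairwise_disjoint_coordSet g, fun i j hij => hord i j hij⟩
  · intro A hA
    refine ⟨isAcceptable_coordMap hA.nonempty hA.disjoint, fun i j hij => ?_⟩
    rw [coordSet_coordMap hA.disjoint]
    exact hA.strictMono_min hij

end Acceptable

/-- The map `g ↦ {A_0^g, …, A_n^g}` is a bijection between ordered acceptable maps
`ℤ^n → ℤ^{n+k}` and partitions of `{0, 1, …, n+k}` into `n+1` nonempty parts. -/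
theorem ordered_acceptable_biject_partitions (n k : ℕ) :
    Set.BijOn (fun g : (Fin n → ℤ) → (Fin (n + k) → ℤ) => partsOf g)
      {g | IsAcceptable g ∧ IsOrdered g}
      {S : Finset (Finset (Fin (n + k + 1))) |
        S.card = n + 1 ∧ (∀ t ∈ S, t.Nonempty) ∧ ∀ a, ∃! t, t ∈ S ∧ a ∈ t} :=
  -- `partsOf g` unfolds to `completedParts` of the family `i ↦ (coordSet g i).image Fin.succ`.
  (bijOn_completedParts 0 n).comp ((bijOn_image_succ n (n + k)).comp (bijOn_coordSet n k))
end

section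
/- The number of equivalence classes of acceptable maps ℤ^n → ℤ^{n+k}, under the equivalence g₁ ∼ g₂ iff g₁ = g₂ ∘ τ for some permutation τ of the n coordinates, is equal to the Stirling number of the second kind S(n+k+1, n+1), i.e., the number of partitions of a set with n+k+1 elements into n+1 nonempty subsets. -/
/-!
Adjoin to an acceptable map `g` a `0`-th coordinate that is identically zero, and let two of the
`n + k + 1` coordinates be related when they agree as functions. This equivalence relation has
`n + 1` classes: the zero class, and one class for each input variable, since injectivity forces
every variable to occur. Permuting the variables does not change the relation; conversely the
relation determines `g` up to the names of its nonzero classes, and any relation with `n + 1`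
classes arises by naming the class of the `0`-th coordinate zero and the others `x_1, …, x_n`.
-/

open Function

section Finpartitions

variable {α : Type*} [Fintype α] [DecidableEq α]

lemma range_finpartition_part (P : Finpartition (Finset.univ : Finset α)) :
    Set.range P.part = P.parts :=
  Set.Subset.antisymm (Set.range_subset_iff.2 fun a => P.part_mem.2 (Finset.mem_univ a))
    (by simpa using P.part_surjOn.subset_range)

lemma finpartition_ext_part {P Q : Finpartition (Finset.univ : Finset α)}
    (h : ∀ a, P.part a = Q.part a) : P = Q :=
  Finpartition.ext <| Finset.coe_injective <| by
    rw [← range_finpartition_part, ← range_finpartition_part, funext h]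

variable (α) in
/-- Finpartitions of a finite type correspond to its equivalence relations, two elements being
related when they lie in the same part. -/
noncomputable def finpartitionEquivSetoid :
    Finpartition (Finset.univ : Finset α) ≃ Setoid α where
  toFun P := Setoid.ker P.part
  invFun s :=
    haveI := Classical.decRel s.r
    Finpartition.ofSetoid s
  left_inv P := by
    classical
    refine finpartition_ext_part fun a => ?_
    ext b
    rw [Finpartition.mem_part_ofSetoid_iff_rel, Setoid.ker_def, eq_comm,
      P.mem_part_iff_part_eq_part (Finset.mem_univ b) (Finset.mem_univ a)]
  right_inv s := by
    classical
    ext a b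
    rw [Setoid.ker_def, eq_comm, ← Finpartition.mem_part_iff_part_eq_part _ (Finset.mem_univ b)
      (Finset.mem_univ a), Finpartition.mem_part_ofSetoid_iff_rel]

lemma card_quotient_finpartitionEquivSetoid (P : Finpartition (Finset.univ : Finset α)) :
    Nat.card (Quotient (finpartitionEquivSetoid α P)) = P.parts.card :=
  calc
    _ = Nat.card (Set.range P.part) := Nat.card_congr (Setoid.quotientKerEquivRange P.part)
    _ = P.parts.card := by
      rw [range_finpartition_part, Nat.card_coe_set_eq, Set.ncard_coe_finset]

lemma stirlingSecond_eq_card_finpartition (u v : ℕ) :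
    stirlingSecond u v =
      Nat.card {P : Finpartition (Finset.univ : Finset (Fin u)) // P.parts.card = v} :=
  Nat.card_congr
    { toFun S := ⟨.ofExistsUnique S.1 (fun t _ => t.subset_univ) (fun a _ => S.2.2.2 a)
        fun h => Finset.not_nonempty_empty (S.2.2.1 ∅ h), S.2.1⟩
      invFun P := ⟨P.1.parts, P.2, fun _ => P.1.nonempty_of_mem_parts,
        fun a => P.1.existsUnique_mem (Finset.mem_univ a)⟩ }

end Finpartitions

section Setoids

/-- Transport of equivalence relations along a bijection. -/
def setoidCongr {α β : Type*} (e : α ≃ β) : Setoid α ≃ Setoid β where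
  toFun := Setoid.comap e.symm
  invFun := Setoid.comap e
  left_inv s := by rw [← Setoid.comap_comp, e.symm_comp_self, Setoid.comap_id]
  right_inv s := by rw [← Setoid.comap_comp, e.self_comp_symm, Setoid.comap_id]

lemma card_quotient_setoidCongr {α β : Type*} (e : α ≃ β) (s : Setoid α) :
    Nat.card (Quotient (setoidCongr e s)) = Nat.card (Quotient s) :=
  Nat.card_congr (Quotient.congr e.symm fun _ _ => Iff.rfl)

theorem card_setoid_card_quotient_eq_stirlingSecond (α : Type*) [Finite α] (v : ℕ) :
    Nat.card {s : Setoid α // Nat.card (Quotient s) = v} = stirlingSecond (Nat.card α) v := by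
  rw [stirlingSecond_eq_card_finpartition]
  let e := (setoidCongr (Finite.equivFin α)).trans (finpartitionEquivSetoid _).symm
  refine Nat.card_congr (e.subtypeEquiv fun s => ?_)
  rw [← card_quotient_finpartitionEquivSetoid, ← card_quotient_setoidCongr (Finite.equivFin α)]
  simp only [e, Equiv.trans_apply, Equiv.apply_symm_apply]

end Setoids

section Surjections

variable {α β ι κ : Type*}

lemma exists_equiv_apply_eq_of_card_eq [Finite β] (h : Nat.card α = Nat.card β) (a : α) (b : β) :
    ∃ e : α ≃ β, e a = b := by
  classical
  have : Nonempty β := ⟨b⟩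
  have : Finite α := Nat.finite_of_card_ne_zero (h ▸ Nat.card_pos.ne')
  let e := (Finite.equivFinOfCardEq h).trans (Finite.equivFin β).symm
  exact ⟨e.trans (Equiv.swap (e a) b), Equiv.swap_apply_left _ _⟩

lemma exists_perm_comp_eq_of_ker_eq {f g : α → β} (hf : Surjective f) (hg : Surjective g)
    (h : Setoid.ker f = Setoid.ker g) : ∃ e : Equiv.Perm β, f = e ∘ g := by
  let ef := Setoid.quotientKerEquivOfSurjective f hf
  let eg := Setoid.quotientKerEquivOfSurjective g hg
  refine ⟨eg.symm.trans ((Quotient.congrRight fun a b => by rw [h]).trans ef), funext fun a => ?_⟩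
  have hga : eg.symm (g a) = ⟦a⟧ := eg.symm_apply_eq.2 rfl
  simp only [comp_apply, Equiv.trans_apply, hga]
  rfl

lemma surjective_bind_iff {f : κ → Option ι} :
    (Surjective fun a : Option κ => a.bind f) ↔ ∀ i, ∃ j, f j = some i := by
  simp [Surjective, Option.forall, Option.exists]

lemma exists_perm_eq_map_of_ker_bind_eq {f g : κ → Option ι}
    (hf : Surjective fun a : Option κ => a.bind f) (hg : Surjective fun a : Option κ => a.bind g)
    (h : Setoid.ker (fun a : Option κ => a.bind f) = Setoid.ker fun a : Option κ => a.bind g) :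
    ∃ σ : Equiv.Perm ι, ∀ j, f j = (g j).map σ := by
  obtain ⟨e, he⟩ := exists_perm_comp_eq_of_ker_eq hf hg h
  have he_none : e none = none := (congrFun he none).symm
  have he_some (i : ι) : e (some i) = some (e.removeNone i) := by
    have h_ne : e (some i) ≠ none := he_none ▸ e.injective.ne (Option.some_ne_none i)
    exact (e.removeNone_some (Option.ne_none_iff_exists'.1 h_ne)).symm
  refine ⟨e.removeNone, fun j => (congrFun he (some j)).trans ?_⟩
  change e (g j) = _
  cases g j with
  | none => exact he_none
  | some i => exact he_some i

end Surjections

section AcceptableMaps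

variable {R ι κ X Y : Type*} [Zero R]

/-- Acceptable maps `R^ι → R^κ`, for arbitrary index types and coefficients with a zero:
`IsAcceptable` is the case `R = ℤ`, `ι = Fin n`, `κ = Fin (n + k)`. -/
def IsAcceptableMap (g : (ι → R) → κ → R) : Prop :=
  Injective g ∧ ∀ j, (∃ i, ∀ x, g x j = x i) ∨ ∀ x, g x j = 0

/-- The coordinate function on `R^ι` named by an element of `Option ι`, where `none` names the
zero function. -/
def coordOrZero (a : Option ι) (x : ι → R) : R := a.elim 0 x

/-- The map `R^ι → R^κ` whose `j`-th output coordinate is the function named by `f j`. -/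
def selectMap (f : κ → Option ι) (x : ι → R) (j : κ) : R := coordOrZero (f j) x

/-- The relation of equality between the coordinate functions of `g`, where `none` stands for an
additional coordinate that is identically zero. -/
def coordKer (g : X → κ → R) : Setoid (Option κ) :=
  Setoid.ker fun a => coordOrZero a ∘ g

lemma coordKer_apply {g : X → κ → R} {a b : Option κ} :
    coordKer g a b ↔ coordOrZero a ∘ g = coordOrZero b ∘ g :=
  Iff.rfl

lemma coordKer_comp_of_surjective (g : X → κ → R) {h : Y → X} (hh : Surjective h) :
    coordKer (g ∘ h) = coordKer g := by
  ext a b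
  simp only [coordKer_apply, ← comp_assoc, hh.injective_comp_right.eq_iff]

lemma selectMap_map {ι' : Type*} (f : κ → Option ι) (σ : ι → ι') :
    selectMap (R := R) (fun j => (f j).map σ) = selectMap f ∘ fun x i => x (σ i) := by
  funext x j
  simp only [selectMap, coordOrZero, comp_apply, Option.elim_map]
  rfl

lemma coordOrZero_comp_selectMap (f : κ → Option ι) (a : Option κ) :
    coordOrZero a ∘ selectMap (R := R) f = coordOrZero (a.bind f) := by
  cases a <;> rfl

lemma selectMap_injective {f : κ → Option ι} (hf : Surjective fun a : Option κ => a.bind f) :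
    Injective (selectMap (R := R) f) := by
  intro x y hxy
  funext i
  obtain ⟨j, hj⟩ := surjective_bind_iff.1 hf i
  simpa only [selectMap, hj, coordOrZero, Option.elim_some] using congrFun hxy j

variable [Nontrivial R]

lemma coordOrZero_injective : Injective (coordOrZero (R := R) (ι := ι)) := by
  classical
  obtain ⟨r, hr⟩ := exists_ne (0 : R)
  have eq_some_of_eq {a : Option ι} {i : ι} (h : coordOrZero (R := R) (some i) = coordOrZero a) :
      some i = a := by
    have := congrFun h (Pi.single i r)
    cases a <;> grind [coordOrZero]
  rintro (_ | i) b h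
  · cases b with
    | none => rfl
    | some j => exact (eq_some_of_eq h.symm).symm
  · exact eq_some_of_eq h

lemma coordKer_selectMap (f : κ → Option ι) :
    coordKer (selectMap (R := R) f) = Setoid.ker fun a : Option κ => a.bind f := by
  ext a b
  rw [coordKer_apply, coordOrZero_comp_selectMap, coordOrZero_comp_selectMap,
    coordOrZero_injective.eq_iff, Setoid.ker_def]

-- If `x_i` does not occur among the outputs, the map cannot tell `r • e_i` from `0`.
lemma surjective_bind_of_selectMap_injective {f : κ → Option ι}
    (hf : Injective (selectMap (R := R) f)) : Surjective fun a : Option κ => a.bind f := by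
  classical
  rw [surjective_bind_iff]
  by_contra! ⟨i, hi⟩
  obtain ⟨r, hr⟩ := exists_ne (0 : R)
  have h_eq : selectMap f (Pi.single i r) = selectMap f 0 := by
    funext j
    cases hj : f j with
    | none => simp only [selectMap, hj, coordOrZero, Option.elim_none]
    | some l =>
      have hl : l ≠ i := fun h => hi j (h ▸ hj)
      simp [selectMap, hj, coordOrZero, hl]
  exact hr (by simpa using congrFun (hf h_eq) i)

lemma isAcceptableMap_iff_exists_selectMap {g : (ι → R) → κ → R} :
    IsAcceptableMap g ↔
      ∃ f : κ → Option ι, (Surjective fun a : Option κ => a.bind f) ∧ selectMap f = g := by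
  constructor
  · rintro ⟨hinj, hcoord⟩
    have exists_name (j : κ) : ∃ a : Option ι, ∀ x, coordOrZero a x = g x j := by
      rcases hcoord j with ⟨i, hi⟩ | h0
      · exact ⟨some i, fun x => (hi x).symm⟩
      · exact ⟨none, fun x => (h0 x).symm⟩
    choose f hf using exists_name
    obtain rfl : selectMap f = g := funext₂ fun x j => hf j x
    exact ⟨f, surjective_bind_of_selectMap_injective hinj, rfl⟩
  · rintro ⟨f, hf, rfl⟩
    refine ⟨selectMap_injective hf, fun j => ?_⟩
    cases hj : f j with
    | none => exact .inr fun x => by simp only [selectMap, hj, coordOrZero, Option.elim_none]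
    | some i => exact .inl ⟨i, fun x => by simp only [selectMap, hj, coordOrZero, Option.elim_some]⟩

lemma IsAcceptableMap.card_quotient_coordKer [Finite ι] {g : (ι → R) → κ → R}
    (hg : IsAcceptableMap g) : Nat.card (Quotient (coordKer g)) = Nat.card ι + 1 := by
  obtain ⟨f, hf, rfl⟩ := isAcceptableMap_iff_exists_selectMap.1 hg
  rw [coordKer_selectMap, Nat.card_congr (Setoid.quotientKerEquivOfSurjective _ hf),
    Finite.card_option]

lemma IsAcceptableMap.exists_perm_of_coordKer_eq {g₁ g₂ : (ι → R) → κ → R}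
    (h₁ : IsAcceptableMap g₁) (h₂ : IsAcceptableMap g₂) (h : coordKer g₁ = coordKer g₂) :
    ∃ τ : Equiv.Perm ι, g₁ = g₂ ∘ fun x i => x (τ i) := by
  obtain ⟨f₁, hf₁, rfl⟩ := isAcceptableMap_iff_exists_selectMap.1 h₁
  obtain ⟨f₂, hf₂, rfl⟩ := isAcceptableMap_iff_exists_selectMap.1 h₂
  rw [coordKer_selectMap, coordKer_selectMap] at h
  obtain ⟨τ, hτ⟩ := exists_perm_eq_map_of_ker_bind_eq hf₁ hf₂ h
  exact ⟨τ, by rw [← selectMap_map, ← funext hτ]⟩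

variable (R) in
lemma exists_isAcceptableMap_coordKer_eq [Finite ι] {s : Setoid (Option κ)}
    (hs : Nat.card (Quotient s) = Nat.card ι + 1) :
    ∃ g : (ι → R) → κ → R, IsAcceptableMap g ∧ coordKer g = s := by
  obtain ⟨e, he⟩ : ∃ e : Quotient s ≃ Option ι, e ⟦none⟧ = none :=
    exists_equiv_apply_eq_of_card_eq (hs.trans Finite.card_option.symm) _ _
  let f (j : κ) : Option ι := e ⟦some j⟧
  have hbind : (fun a : Option κ => a.bind f) = e ∘ Quotient.mk s := by
    funext a
    cases a with
    | none => exact he.symm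
    | some j => rfl
  have hf : Surjective fun a : Option κ => a.bind f :=
    hbind ▸ e.surjective.comp Quotient.mk_surjective
  refine ⟨selectMap f, isAcceptableMap_iff_exists_selectMap.2 ⟨f, hf, rfl⟩, ?_⟩
  rw [coordKer_selectMap, hbind]
  ext a b
  rw [Setoid.ker_def, comp_apply, comp_apply, e.injective.eq_iff, Quotient.eq]

variable (R ι κ) in
theorem card_acceptable_classes_general [Finite ι] [Finite κ] :
    Nat.card (Quot fun g₁ g₂ : {g : (ι → R) → κ → R // IsAcceptableMap g} =>
        ∃ τ : Equiv.Perm ι, g₁.1 = g₂.1 ∘ fun x i => x (τ i)) =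
      stirlingSecond (Nat.card κ + 1) (Nat.card ι + 1) := by
  rw [← Finite.card_option, ← card_setoid_card_quotient_eq_stirlingSecond]
  refine Nat.card_congr (Equiv.ofBijective
    (Quot.lift (fun g => ⟨coordKer g.1, g.2.card_quotient_coordKer⟩) ?invariant)
    ⟨?injective, ?surjective⟩)
  case invariant =>
    rintro ⟨_, _⟩ ⟨g, _⟩ ⟨τ, rfl⟩
    exact Subtype.ext (coordKer_comp_of_surjective g τ.injective.surjective_comp_right)
  case injective =>
    rintro ⟨g₁⟩ ⟨g₂⟩ h
    exact Quot.sound (g₁.2.exists_perm_of_coordKer_eq g₂.2 (congrArg Subtype.val h))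
  case surjective =>
    rintro ⟨s, hs⟩
    obtain ⟨g, hg, rfl⟩ := exists_isAcceptableMap_coordKer_eq R hs
    exact ⟨Quot.mk _ ⟨g, hg⟩, rfl⟩

end AcceptableMaps

/-- The number of equivalence classes of acceptable maps `ℤ^n → ℤ^{n+k}` under
precomposition with coordinate permutations is the Stirling number `S(n+k+1, n+1)`. -/
theorem card_acceptable_classes (n k : ℕ) :
    Nat.card (Quot fun g₁ g₂ : {g : (Fin n → ℤ) → (Fin (n + k) → ℤ) // IsAcceptable g} =>
        ∃ τ : Equiv.Perm (Fin n), g₁.1 = g₂.1 ∘ fun x : Fin n → ℤ => fun i => x (τ i)) =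
      stirlingSecond (n + k + 1) (n + 1) := by
  have h := card_acceptable_classes_general ℤ (Fin n) (Fin (n + k))
  rwa [Nat.card_fin, Nat.card_fin] at h
end
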